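/- Let Ω ⊂ ℝ² be a bounded, open, connected set with Lipschitz boundary and let u ∈ W^{1,1}(Ω;S¹). Then for every open set U ⊆ Ω one has 𝒜**(u,U) = ∫_U √(1 + |∇u|²) dx, where |∇u| is the Frobenius norm of the weak gradient of u. -/

import Mathlib

open MeasureTheory Metric Filter Set
open scoped ENNReal NNReal Topology Classical

noncomputable section

abbrev R2 := EuclideanSpace ℝ (Fin 2)

/-- `Ω ⊂ ℝ²` has Lipschitz boundary: near every boundary point, after a rigid motion,
`Ω` coincides with the open region strictly above the graph of a Lipschitz function. -/
def HasLipschitzBoundary (Ω : Set R2) : Prop :=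
  ∀ p ∈ frontier Ω, ∃ r : ℝ, 0 < r ∧ ∃ (f : R2 ≃ᵢ R2) (γ : ℝ → ℝ) (L : ℝ≥0),
    LipschitzWith L γ ∧ ∀ x ∈ Metric.ball p r, (x ∈ Ω ↔ γ (f x 0) < f x 1)

/-- `G` is the weak (distributional) gradient of `u` on `Ω`:
`∫_Ω u_i ∂_j φ = -∫_Ω G_{ij} φ` for all test functions `φ ∈ C_c^∞(Ω)`. -/
def IsWeakGradient (Ω : Set R2) (u : R2 → R2) (G : R2 → Matrix (Fin 2) (Fin 2) ℝ) : Prop :=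
  ∀ φ : R2 → ℝ, ContDiff ℝ (⊤ : ℕ∞) φ → HasCompactSupport φ → tsupport φ ⊆ Ω →
    ∀ i j : Fin 2,
      (∫ x in Ω, u x i * fderiv ℝ φ x (EuclideanSpace.single j 1)) =
        - ∫ x in Ω, G x i j * φ x

/-- `u ∈ W^{1,1}(Ω;ℝ²)` with weak gradient `G`. -/
def MemW11 (Ω : Set R2) (u : R2 → R2) (G : R2 → Matrix (Fin 2) (Fin 2) ℝ) : Prop :=
  IntegrableOn u Ω ∧ (∀ i j : Fin 2, IntegrableOn (fun x => G x i j) Ω) ∧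
    IsWeakGradient Ω u G

/-- `|u| = 1` a.e. in `Ω`. -/
def SphereValued (Ω : Set R2) (u : R2 → R2) : Prop :=
  ∀ᵐ x ∂(volume.restrict Ω), ‖u x‖ = 1

/-- Frobenius norm of a `2×2` matrix. -/
def frob (M : Matrix (Fin 2) (Fin 2) ℝ) : ℝ :=
  Real.sqrt (∑ i, ∑ j, (M i j) ^ 2)

/-- Jacobian matrix of a map `v : ℝ² → ℝ²`. -/
def jacobianMatrix (v : R2 → R2) (x : R2) : Matrix (Fin 2) (Fin 2) ℝ :=
  Matrix.of fun i j => fderiv ℝ v x (EuclideanSpace.single j 1) i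

/-- Classical graph area `A(v,A) = ∫_A √(1 + |∇v|² + (Jv)²)` of a `C¹` map. -/
def classicalArea (A : Set R2) (v : R2 → R2) : ℝ≥0∞ :=
  ∫⁻ x in A, ENNReal.ofReal
    (Real.sqrt (1 + (∑ i, ∑ j, (jacobianMatrix v x i j) ^ 2) + (jacobianMatrix v x).det ^ 2))

/-- `L¹`-relaxed area functional `𝒜(u,A)`. -/
def relaxedArea (u : R2 → R2) (A : Set R2) : ℝ≥0∞ :=
  sInf { a : ℝ≥0∞ | ∃ v : ℕ → R2 → R2,
    (∀ k, ContDiffOn ℝ 1 (v k) A) ∧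
    (∀ k, IntegrableOn (fun x => v k x - u x) A) ∧
    Tendsto (fun k => ∫ x in A, ‖v k x - u x‖) atTop (nhds 0) ∧
    a = Filter.liminf (fun k => classicalArea A (v k)) atTop }

/-- `λ_u = (1/2)(u₁ ∇^⊥u₂ − u₂ ∇^⊥u₁)`, computed from the weak gradient `G`. -/
def lambdaVec (u : R2 → R2) (G : R2 → Matrix (Fin 2) (Fin 2) ℝ) (x : R2) : Fin 2 → ℝ :=
  ![ (1 / 2) * (-(u x 0) * G x 1 1 + u x 1 * G x 0 1),
     (1 / 2) * (u x 0 * G x 1 0 - u x 1 * G x 0 0) ]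

/-- Distributional Jacobian pairing `⟨Det(∇u), φ⟩ = ∫_Ω λ_u · ∇φ`. -/
def detPairing (Ω : Set R2) (u : R2 → R2) (G : R2 → Matrix (Fin 2) (Fin 2) ℝ)
    (φ : R2 → ℝ) : ℝ :=
  ∫ x in Ω, ∑ j, lambdaVec u G x j * fderiv ℝ φ x (EuclideanSpace.single j 1)

/-- `φ ∈ Lip₀(Ω)`: Lipschitz on `cl(Ω)` and vanishing on `∂Ω`. -/
def MemLip0 (Ω : Set R2) (φ : R2 → ℝ) : Prop :=
  (∃ L : ℝ≥0, LipschitzOnWith L φ (closure Ω)) ∧ ∀ p ∈ frontier Ω, φ p = 0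

/-- Admissible test functions for the flat norm: Lipschitz constant `≤ L` on `cl(Ω)`,
vanishing on `Z`, and bounded by `1` on `cl(Ω)`. -/
def FlatAdmissible (Ω Z : Set R2) (L : ℝ≥0) (φ : R2 → ℝ) : Prop :=
  LipschitzOnWith L φ (closure Ω) ∧ (∀ p ∈ Z, φ p = 0) ∧ ∀ p ∈ closure Ω, |φ p| ≤ 1

/-- Flat norm of a functional `F`, with vanishing condition on the set `Z`. -/
def flatNormOn (Ω Z : Set R2) (L : ℝ≥0) (F : (R2 → ℝ) → ℝ) : ℝ≥0∞ :=
  ⨆ φ ∈ {φ : R2 → ℝ | FlatAdmissible Ω Z L φ}, ENNReal.ofReal (F φ)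

/-- Flat norm of a functional `F` on `Lip₀(Ω)`; `L = 2` gives `‖·‖_{flat,α}` (α = 1/2),
`L = 1` gives `‖·‖_flat`. -/
def flatNorm (Ω : Set R2) (L : ℝ≥0) (F : (R2 → ℝ) → ℝ) : ℝ≥0∞ :=
  flatNormOn Ω (frontier Ω) L F

/-- `d̄_Ω(x,y) = min{|x−y|, dist(x,∂Ω) + dist(y,∂Ω)}`. -/
def dbar (Ω : Set R2) (x y : R2) : ℝ :=
  min (dist x y) (Metric.infDist x (frontier Ω) + Metric.infDist y (frontier Ω))

/-- Countably subadditive interior envelope `𝒜**(u,V)` (relative to `Ω`). -/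
def envA (u : R2 → R2) (Ω V : Set R2) : ℝ≥0∞ :=
  sInf { a : ℝ≥0∞ | ∃ A : ℕ → Set R2,
    (∀ k, IsOpen (A k) ∧ A k ⊆ Ω) ∧ V ⊆ ⋃ k, A k ∧ a = ∑' k, relaxedArea u (A k) }

/-- Property `(P_f)` for a finite family of pairs of points of `cl(Ω)`. -/
def SatisfiesPf (Ω : Set R2) {n : ℕ} (x y : Fin n → R2) : Prop :=
  (∀ k, (x k ∈ Ω ∧ y k ∈ frontier Ω ∧ dist (x k) (y k) = Metric.infDist (x k) (frontier Ω)) ∨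
        (y k ∈ Ω ∧ x k ∈ frontier Ω ∧ dist (x k) (y k) = Metric.infDist (y k) (frontier Ω))) ∧
  ∀ i j, x i ∈ Ω → y j ∈ Ω → x i ≠ y j

/-- The points of the family `x, y` lying in `Ω` are distinct and three by three
not collinear. -/
def InteriorPointsGeneric (Ω : Set R2) {n : ℕ} (x y : Fin n → R2) : Prop :=
  (∀ a b : Fin n ⊕ Fin n, Sum.elim x y a ∈ Ω → Sum.elim x y b ∈ Ω → a ≠ b →
    Sum.elim x y a ≠ Sum.elim x y b) ∧
  ∀ a b c : Fin n ⊕ Fin n, Sum.elim x y a ∈ Ω → Sum.elim x y b ∈ Ω → Sum.elim x y c ∈ Ω →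
    a ≠ b → a ≠ c → b ≠ c →
    ¬ Collinear ℝ ({Sum.elim x y a, Sum.elim x y b, Sum.elim x y c} : Set R2)

/-- `ι(w₁,w₂) = (w₁,−w₂)`. -/
def conjPt (w : R2) : R2 := (WithLp.equiv 2 (Fin 2 → ℝ)).symm ![w 0, -(w 1)]

/-- `u` is a (positive/negative) vortex around the points of the family lying in `Ω`:
the closed discs of radii `ρ` are contained in `Ω` and pairwise disjoint,
`u(z) = (z−x_i)/|z−x_i|` on `B_{ρ}(x_i)` and `u(z) = ι((z−y_j)/|z−y_j|)` on `B_{ρ}(y_j)`. -/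
def VortexAt (Ω : Set R2) (u : R2 → R2) {n : ℕ} (x y : Fin n → R2)
    (ρ : Fin n ⊕ Fin n → ℝ) : Prop :=
  (∀ a, Sum.elim x y a ∈ Ω → Metric.closedBall (Sum.elim x y a) (ρ a) ⊆ Ω) ∧
  (∀ a b, a ≠ b → Sum.elim x y a ∈ Ω → Sum.elim x y b ∈ Ω →
    Disjoint (Metric.closedBall (Sum.elim x y a) (ρ a))
      (Metric.closedBall (Sum.elim x y b) (ρ b))) ∧
  (∀ i, x i ∈ Ω → ∀ᵐ z ∂(volume.restrict (Metric.ball (x i) (ρ (Sum.inl i)))),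
    u z = ‖z - x i‖⁻¹ • (z - x i)) ∧
  (∀ i, y i ∈ Ω → ∀ᵐ z ∂(volume.restrict (Metric.ball (y i) (ρ (Sum.inr i)))),
    u z = conjPt (‖z - y i‖⁻¹ • (z - y i)))

/-- The energy `E(I_P, I_D, τ)` of a partition `{I_Dᶜ, I_D}` of `I` and an injection
`τ : I_D → I`. -/
def energy (Ω : Set R2) {n : ℕ} (x y : Fin n → R2) (ID : Finset (Fin n))
    (τ : Fin n → Fin n) : ℝ≥0∞ :=
  ((IDᶜ.filter fun k => x k ∈ Ω).card : ℝ≥0∞) +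
  (((Finset.univ \ ID.image τ).filter fun j => y j ∈ Ω).card : ℝ≥0∞) +
  2 * ∑ k ∈ ID, μH[1] (segment ℝ (y (τ k)) (x k) ∩ Ω)

/-
Lower bound: Jensen's inequality for `m ↦ |(1, m)|` shows that mollification decreases
`∫ √(1 + |∇v|²)`, which is at most the area of the graph of `v`. For a fixed mollifier the gradients
converge pointwise when `v` tends to `u` in `L¹`, and the mollifier is removed at the end.

Upper bound: fix a disk of radius of order `1 / m` around a point of the circle and compose the
mollified maps with a smooth map `Φ` of the plane into the circle that equals the identity on the
circle outside the disk. These compositions have zero Jacobian determinant, so the area of their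
graphs converges to `∫ √(1 + |∇(Φ ∘ u)|²)`. The derivative of `Φ` on the disk is of order `m`, but
among `m` disjoint disks one is visited by `u` on at most the fraction `1 / m` of the area
`ν = √(1 + |∇u|²) dx`. With all disks in a half plane `H` and `m → ∞` this gives
`𝒜(u, A) ≤ ν(A) + C ν(A ∩ u⁻¹(H))`. Two opposite half planes cover the values of `u`, and outer
regularity of `ν` provides open covers of the two pieces of the domain with small errors.
-/

open scoped Convolution

/-- A sequence of bump functions whose supports shrink to the origin. -/
def shrinkingBump (E : Type*) [NormedAddCommGroup E] (k : ℕ) : ContDiffBump (0 : E) where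
  rIn := 1 / (2 * ((k : ℝ) + 1))
  rOut := 1 / ((k : ℝ) + 1)
  rIn_pos := by positivity
  rIn_lt_rOut := one_div_lt_one_div_of_lt (by positivity) (by linarith [k.cast_nonneg (α := ℝ)])

lemma tendsto_rOut_shrinkingBump (E : Type*) [NormedAddCommGroup E] :
    Tendsto (fun k ↦ (shrinkingBump E k).rOut) atTop (𝓝 0) :=
  tendsto_one_div_add_atTop_nhds_zero_nat

section Mollification

variable {E F F' : Type*} [NormedAddCommGroup E] [NormedSpace ℝ E] [FiniteDimensional ℝ E]
  [MeasurableSpace E] [BorelSpace E] {μ : Measure E} [μ.IsAddHaarMeasure]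
  [NormedAddCommGroup F] [NormedSpace ℝ F] [NormedAddCommGroup F'] [NormedSpace ℝ F']
  {φ : ContDiffBump (0 : E)} {f g : E → F}

/-- The mollification `ρ ∗ f` of `f`, with kernel `ρ` the bump function `φ` normalized to have
integral one. -/
def mollify (φ : ContDiffBump (0 : E)) (μ : Measure E) [IsLocallyFiniteMeasure μ]
    [μ.IsOpenPosMeasure] (f : E → F) : E → F :=
  φ.normed μ ⋆[ContinuousLinearMap.lsmul ℝ ℝ, μ] f

lemma mollify_apply (x : E) : mollify φ μ f x = ∫ t, φ.normed μ (x - t) • f t ∂μ := by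
  rw [mollify, convolution_lsmul_swap]

lemma integrable_normed_smul (hf : LocallyIntegrable f μ) (x : E) :
    Integrable (fun t ↦ φ.normed μ (x - t) • f t) μ :=
  ((φ.hasCompactSupport_normed (μ := μ)).convolutionExists_left
    (ContinuousLinearMap.lsmul ℝ ℝ) φ.continuous_normed hf x).integrable_swap

lemma contDiff_mollify {n : ℕ∞} (hf : LocallyIntegrable f μ) : ContDiff ℝ n (mollify φ μ f) :=
  φ.hasCompactSupport_normed.contDiff_convolution_left _ φ.contDiff_normed hf

lemma mollify_sub (hf : LocallyIntegrable f μ) (hg : LocallyIntegrable g μ) (x : E) :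
    mollify φ μ (f - g) x = mollify φ μ f x - mollify φ μ g x := by
  simp only [mollify_apply, Pi.sub_apply, smul_sub]
  exact integral_sub (integrable_normed_smul hf x) (integrable_normed_smul hg x)

lemma mollify_continuousLinearMap_comp [CompleteSpace F] [CompleteSpace F']
    (L : F →L[ℝ] F') (hf : LocallyIntegrable f μ) (x : E) :
    mollify φ μ (fun t ↦ L (f t)) x = L (mollify φ μ f x) := by
  simp only [mollify_apply, ← L.integral_comp_comm (integrable_normed_smul hf x), map_smul]

lemma fderiv_mollify_continuousLinearMap_comp [CompleteSpace F] [CompleteSpace F']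
    (L : F →L[ℝ] F') (hf : LocallyIntegrable f μ) (x e : E) :
    fderiv ℝ (mollify φ μ fun t ↦ L (f t)) x e = L (fderiv ℝ (mollify φ μ f) x e) := by
  have hd := (contDiff_mollify (φ := φ) (n := 1) hf).differentiable one_ne_zero x
  rw [funext (mollify_continuousLinearMap_comp L hf)]
  exact congrArg (· e) (L.hasFDerivAt.comp x hd.hasFDerivAt).fderiv

lemma norm_mollify_le (x : E) : ‖mollify φ μ f x‖ ≤ mollify φ μ (fun t ↦ ‖f t‖) x := by
  simp only [mollify_apply]
  refine (norm_integral_le_integral_norm _).trans_eq (integral_congr_ae (.of_forall fun t ↦ ?_))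
  simp only [norm_smul, Real.norm_of_nonneg (φ.nonneg_normed _), smul_eq_mul]

lemma lintegral_enorm_normed : ∫⁻ t, ‖φ.normed μ t‖ₑ ∂μ = 1 := by
  rw [← ofReal_integral_norm_eq_lintegral_enorm φ.integrable_normed]
  simp only [Real.norm_of_nonneg (φ.nonneg_normed _), φ.integral_normed, ENNReal.ofReal_one]

lemma lintegral_enorm_mollify_le (hf : AEStronglyMeasurable f μ) :
    ∫⁻ x, ‖mollify φ μ f x‖ₑ ∂μ ≤ ∫⁻ x, ‖f x‖ₑ ∂μ := by
  have hmeas : AEMeasurable (fun p : E × E ↦ ‖φ.normed μ p.2‖ₑ * ‖f (p.1 - p.2)‖ₑ) (μ.prod μ) :=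
    (φ.continuous_normed.enorm.measurable.comp measurable_snd).aemeasurable.mul
      (hf.comp_quasiMeasurePreserving (quasiMeasurePreserving_sub_of_right_invariant μ μ)).enorm
  calc ∫⁻ x, ‖mollify φ μ f x‖ₑ ∂μ
      ≤ ∫⁻ x, ∫⁻ t, ‖φ.normed μ t‖ₑ * ‖f (x - t)‖ₑ ∂μ ∂μ :=
        lintegral_mono fun x ↦ (enorm_integral_le_lintegral_enorm _).trans_eq
          (by simp only [ContinuousLinearMap.lsmul_apply, enorm_smul])
    _ = ∫⁻ t, ∫⁻ x, ‖φ.normed μ t‖ₑ * ‖f (x - t)‖ₑ ∂μ ∂μ := lintegral_lintegral_swap hmeas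
    _ = ∫⁻ t, ‖φ.normed μ t‖ₑ * ∫⁻ x, ‖f x‖ₑ ∂μ ∂μ := by
        refine lintegral_congr fun t ↦ ?_
        rw [lintegral_const_mul' _ _ enorm_ne_top,
          lintegral_sub_right_eq_self (fun x ↦ ‖f x‖ₑ) t]
    _ = ∫⁻ x, ‖f x‖ₑ ∂μ := by
        rw [lintegral_mul_const _ φ.continuous_normed.enorm.measurable, lintegral_enorm_normed,
          one_mul]

lemma mollify_indicator_const [CompleteSpace F] {A : Set E} {x : E}
    (hx : closedBall x φ.rOut ⊆ A) (c : F) :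
    mollify φ μ (A.indicator fun _ ↦ c) x = c := by
  have h : ∀ t, φ.normed μ (x - t) • A.indicator (fun _ ↦ c) t = φ.normed μ (x - t) • c := by
    intro t
    by_cases ht : t ∈ A
    · rw [indicator_of_mem ht]
    · have hball : x - t ∉ Function.support (φ.normed μ) := by
        rw [φ.support_normed_eq, mem_ball_zero_iff, ← dist_eq_norm, dist_comm]
        exact fun hlt ↦ ht (hx (mem_closedBall.2 hlt.le))
      rw [Function.notMem_support.1 hball, zero_smul, zero_smul]
  simp only [mollify_apply, h]
  rw [integral_smul_const, integral_sub_left_eq_self (φ.normed μ) μ x, φ.integral_normed, one_smul]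

lemma fderiv_mollify_apply [CompleteSpace F] (hf : LocallyIntegrable f μ) (x e : E) :
    fderiv ℝ (mollify φ μ f) x e = ∫ t, fderiv ℝ (φ.normed μ) (x - t) e • f t ∂μ := by
  have hφ : ContDiff ℝ 1 (φ.normed μ) := φ.contDiff_normed
  rw [mollify, (φ.hasCompactSupport_normed.hasFDerivAt_convolution_left
    (ContinuousLinearMap.lsmul ℝ ℝ) hφ hf x).fderiv, convolution_eq_swap,
    ContinuousLinearMap.integral_apply]
  · rfl
  · exact ((φ.hasCompactSupport_normed.fderiv ℝ).convolutionExists_left _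
      (hφ.continuous_fderiv one_ne_zero) hf x).integrable_swap

lemma exists_norm_fderiv_mollify_le [CompleteSpace F] (φ : ContDiffBump (0 : E)) (μ : Measure E)
    [μ.IsAddHaarMeasure] :
    ∃ C, ∀ f : E → F, Integrable f μ → ∀ x e, ‖fderiv ℝ (mollify φ μ f) x e‖ ≤
      C * ‖e‖ * ∫ t, ‖f t‖ ∂μ := by
  obtain ⟨C, hC⟩ :=
    ((φ.hasCompactSupport_normed (μ := μ)).fderiv (𝕜 := ℝ)).exists_bound_of_continuous
    ((φ.contDiff_normed (n := 1)).continuous_fderiv one_ne_zero)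
  refine ⟨C, fun f hf x e ↦ ?_⟩
  rw [fderiv_mollify_apply hf.locallyIntegrable, ← integral_const_mul]
  refine norm_integral_le_of_norm_le (hf.norm.const_mul _) (.of_forall fun t ↦ ?_)
  rw [norm_smul]
  gcongr
  exact ContinuousLinearMap.le_of_opNorm_le _ (hC _) e

lemma tendsto_fderiv_mollify [CompleteSpace F] {f' : ℕ → E → F} (hf : Integrable f μ)
    (hf' : ∀ l, Integrable (f' l) μ) (h : Tendsto (fun l ↦ ∫ t, ‖f' l t - f t‖ ∂μ) atTop (𝓝 0))
    (x e : E) :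
    Tendsto (fun l ↦ fderiv ℝ (mollify φ μ (f' l)) x e) atTop
      (𝓝 (fderiv ℝ (mollify φ μ f) x e)) := by
  obtain ⟨C, hC⟩ := exists_norm_fderiv_mollify_le (F := F) φ μ
  rw [tendsto_iff_norm_sub_tendsto_zero]
  refine squeeze_zero (fun _ ↦ norm_nonneg _) (fun l ↦ ?_)
    (by simpa only [mul_zero] using h.const_mul (C * ‖e‖))
  have hdiff : ∀ {w : E → F}, Integrable w μ → DifferentiableAt ℝ (mollify φ μ w) x := fun hw ↦
    (contDiff_mollify (n := 1) hw.locallyIntegrable).differentiable one_ne_zero x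
  have hsub : mollify φ μ (f' l - f) = mollify φ μ (f' l) - mollify φ μ f :=
    funext (mollify_sub (hf' l).locallyIntegrable hf.locallyIntegrable)
  have := hC (f' l - f) ((hf' l).sub hf) x e
  rwa [hsub, fderiv_sub (hdiff (hf' l)) (hdiff hf)] at this

lemma ae_tendsto_mollify [CompleteSpace F] (hf : LocallyIntegrable f μ) :
    ∀ᵐ x ∂μ, Tendsto (fun k ↦ mollify (shrinkingBump E k) μ f x) atTop (𝓝 (f x)) := by
  have hK : ∀ k, (shrinkingBump E k).rOut ≤ 2 * (shrinkingBump E k).rIn := fun k ↦ by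
    simp only [shrinkingBump]
    field_simp
    exact le_rfl
  exact ContDiffBump.ae_convolution_tendsto_right_of_locallyIntegrable (K := 2)
    (tendsto_rOut_shrinkingBump E) (.of_forall hK) hf

end Mollification

section GraphNorm

variable {F F' : Type*} [NormedAddCommGroup F] [NormedAddCommGroup F']

/-- The area integrand `√(1 + ‖m‖²)`, that is, the Euclidean norm of the vector `(1, m)`. -/
def graphNorm (m : F) : ℝ := √(1 + ‖m‖ ^ 2)

lemma norm_toLp_one_eq_graphNorm (m : F) : ‖WithLp.toLp 2 ((1 : ℝ), m)‖ = graphNorm m := by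
  simp [WithLp.prod_norm_eq_of_L2, graphNorm]

lemma continuous_graphNorm : Continuous (graphNorm : F → ℝ) := by
  unfold graphNorm
  fun_prop

lemma graphNorm_nonneg (m : F) : 0 ≤ graphNorm m := Real.sqrt_nonneg _

lemma one_le_graphNorm (m : F) : 1 ≤ graphNorm m :=
  Real.one_le_sqrt.2 (le_add_of_nonneg_right (sq_nonneg _))

lemma norm_le_graphNorm (m : F) : ‖m‖ ≤ graphNorm m :=
  Real.le_sqrt_of_sq_le (le_add_of_nonneg_left zero_le_one)

lemma graphNorm_le_one_add_norm (m : F) : graphNorm m ≤ 1 + ‖m‖ :=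
  Real.sqrt_le_iff.2 ⟨by positivity, by nlinarith only [norm_nonneg m]⟩

lemma graphNorm_le_mul {m : F} {m' : F'} {K : ℝ} (hK : 1 ≤ K) (h : ‖m‖ ≤ K * ‖m'‖) :
    graphNorm m ≤ K * graphNorm m' := by
  have hK₀ : 0 ≤ K := zero_le_one.trans hK
  rw [graphNorm, graphNorm, ← Real.sqrt_sq hK₀, ← Real.sqrt_mul (sq_nonneg K)]
  gcongr
  nlinarith only [pow_le_pow_left₀ (norm_nonneg m) h 2, one_le_pow₀ hK (n := 2)]

variable {E : Type*} [MeasurableSpace E] {μ : Measure E} {f : E → F} {A : Set E}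

lemma aemeasurable_graphNorm (hf : AEStronglyMeasurable f μ) :
    AEMeasurable (fun x ↦ ENNReal.ofReal (graphNorm (f x))) μ :=
  (continuous_graphNorm.comp_aestronglyMeasurable hf).aemeasurable.ennreal_ofReal

lemma integrableOn_graphNorm (hf : IntegrableOn f A μ) (hA : μ A ≠ ∞) :
    IntegrableOn (fun x ↦ graphNorm (f x)) A μ := by
  refine ((integrableOn_const (C := (1 : ℝ)) hA).add hf.norm).mono'
    (continuous_graphNorm.comp_aestronglyMeasurable hf.aestronglyMeasurable)
    (.of_forall fun x ↦ ?_)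
  rw [Real.norm_of_nonneg (graphNorm_nonneg _)]
  exact graphNorm_le_one_add_norm (f x)

end GraphNorm

section InnerParallelSet

variable {X : Type*} [PseudoMetricSpace X] {A B : Set X} {r s : ℝ} {x : X}

/-- The points whose distance to the complement of `A` is larger than `r`. -/
def innerParallelSet (A : Set X) (r : ℝ) : Set X := (cthickening r Aᶜ)ᶜ

lemma isOpen_innerParallelSet : IsOpen (innerParallelSet A r) :=
  isClosed_cthickening.isOpen_compl

lemma innerParallelSet_subset : innerParallelSet A r ⊆ A :=
  compl_subset_comm.1 (self_subset_cthickening Aᶜ)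

lemma innerParallelSet_mono (hAB : A ⊆ B) (hrs : r ≤ s) :
    innerParallelSet A s ⊆ innerParallelSet B r :=
  compl_subset_compl.2 <| (cthickening_subset_of_subset r (compl_subset_compl.2 hAB)).trans
    (cthickening_mono hrs _)

lemma closedBall_subset_of_mem_innerParallelSet (hx : x ∈ innerParallelSet A r) :
    closedBall x r ⊆ A := by
  intro y hy
  by_contra hyA
  exact hx (closedBall_subset_cthickening hyA r (mem_closedBall_comm.1 hy))

lemma eventually_mem_innerParallelSet {ι : Type*} {l : Filter ι} {ρ : ι → ℝ} (hA : IsOpen A)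
    (hρ : Tendsto ρ l (𝓝 0)) (hx : x ∈ A) : ∀ᶠ k in l, x ∈ innerParallelSet A (ρ k) := by
  have hx' : x ∉ closure Aᶜ := by rwa [hA.isClosed_compl.closure_eq, notMem_compl_iff]
  simp only [closure_eq_iInter_cthickening, mem_iInter, not_forall] at hx'
  obtain ⟨δ, hδ, hxδ⟩ := hx'
  filter_upwards [hρ.eventually_lt_const hδ] with k hk
  exact fun h ↦ hxδ (cthickening_mono hk.le _ h)

lemma tendsto_indicator_inter_innerParallelSet {ι β : Type*} [Zero β] [TopologicalSpace β]
    {l : Filter ι} {ρ : ι → ℝ} {f : ι → X → β} {f₀ : X → β} (hA : IsOpen A)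
    (hρ : Tendsto ρ l (𝓝 0)) (hBA : B ⊆ A) (h : x ∈ A → Tendsto (f · x) l (𝓝 (f₀ x))) :
    Tendsto (fun k ↦ (B ∩ innerParallelSet A (ρ k)).indicator (f k) x) l
      (𝓝 (B.indicator f₀ x)) := by
  by_cases hx : x ∈ B
  · rw [indicator_of_mem hx]
    refine (h (hBA hx)).congr' ?_
    filter_upwards [eventually_mem_innerParallelSet hA hρ (hBA hx)] with k hk
    exact (indicator_of_mem (mem_inter hx hk) _).symm
  · simp only [indicator_of_notMem hx, indicator_of_notMem fun h ↦ hx (mem_of_mem_inter_left h),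
      tendsto_const_nhds]

end InnerParallelSet

section Jensen

variable {E F : Type*} [NormedAddCommGroup E] [NormedSpace ℝ E] [FiniteDimensional ℝ E]
  [MeasurableSpace E] [BorelSpace E] {μ : Measure E} [μ.IsAddHaarMeasure]
  [NormedAddCommGroup F] [NormedSpace ℝ F] {φ : ContDiffBump (0 : E)} {f : E → F}
  {A : Set E} {x : E}

/- Jensen's inequality for `m ↦ ‖(1, m)‖` is the triangle inequality for the vector integral of
`(1, f)`. -/
lemma graphNorm_mollify_le [CompleteSpace F] (hA : MeasurableSet A)
    (hf : LocallyIntegrable (A.indicator f) μ) (hx : closedBall x φ.rOut ⊆ A) :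
    graphNorm (mollify φ μ (A.indicator f) x) ≤
      mollify φ μ (A.indicator fun t ↦ graphNorm (f t)) x := by
  let T : (ℝ × F) ≃L[ℝ] WithLp 2 (ℝ × F) := (WithLp.prodContinuousLinearEquiv 2 ℝ ℝ F).symm
  have hone : LocallyIntegrable (A.indicator fun _ ↦ (1 : ℝ)) μ :=
    (locallyIntegrable_const 1).indicator hA
  have hpair : mollify φ μ (A.indicator fun t ↦ T (1, f t)) x =
      T (1, mollify φ μ (A.indicator f) x) := by
    conv_rhs => rw [← mollify_indicator_const (μ := μ) hx (1 : ℝ)]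
    simp only [mollify_apply]
    rw [← integral_pair (integrable_normed_smul hone x) (integrable_normed_smul hf x),
      ← T.integral_comp_comm]
    refine integral_congr_ae (.of_forall fun t ↦ ?_)
    by_cases ht : t ∈ A
    · simp [ht, ← map_smul]
    · simp only [indicator_of_notMem ht, smul_zero, Prod.mk_zero_zero, map_zero]
  calc graphNorm (mollify φ μ (A.indicator f) x)
      = ‖mollify φ μ (A.indicator fun t ↦ T (1, f t)) x‖ := by
        rw [hpair]
        exact (norm_toLp_one_eq_graphNorm _).symm
    _ ≤ mollify φ μ (fun t ↦ ‖A.indicator (fun t ↦ T (1, f t)) t‖) x := norm_mollify_le x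
    _ = mollify φ μ (A.indicator fun t ↦ graphNorm (f t)) x := by
        congr 1
        ext t
        rw [norm_indicator_eq_indicator_norm]
        exact congrFun (congrArg A.indicator (funext fun t ↦ norm_toLp_one_eq_graphNorm (f t))) t

lemma lintegral_graphNorm_mollify_le [CompleteSpace F] (hA : MeasurableSet A)
    (hf : IntegrableOn f A μ) :
    ∫⁻ x in innerParallelSet A φ.rOut,
      ENNReal.ofReal (graphNorm (mollify φ μ (A.indicator f) x)) ∂μ ≤
        ∫⁻ x in A, ENNReal.ofReal (graphNorm (f x)) ∂μ := by
  set g : E → ℝ := A.indicator fun t ↦ graphNorm (f t)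
  have hg : AEStronglyMeasurable g μ := (aestronglyMeasurable_indicator_iff hA).2
    (continuous_graphNorm.comp_aestronglyMeasurable hf.aestronglyMeasurable)
  have hloc : LocallyIntegrable (A.indicator f) μ := (hf.integrable_indicator hA).locallyIntegrable
  calc ∫⁻ x in innerParallelSet A φ.rOut,
        ENNReal.ofReal (graphNorm (mollify φ μ (A.indicator f) x)) ∂μ
      ≤ ∫⁻ x in innerParallelSet A φ.rOut, ‖mollify φ μ g x‖ₑ ∂μ :=
        setLIntegral_mono' isOpen_innerParallelSet.measurableSet fun x hx ↦
          (ENNReal.ofReal_le_ofReal (graphNorm_mollify_le hA hloc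
            (closedBall_subset_of_mem_innerParallelSet hx))).trans (Real.ofReal_le_enorm _)
    _ ≤ ∫⁻ x, ‖mollify φ μ g x‖ₑ ∂μ := setLIntegral_le_lintegral _ _
    _ ≤ ∫⁻ x, ‖g x‖ₑ ∂μ := lintegral_enorm_mollify_le hg
    _ = ∫⁻ x in A, ENNReal.ofReal (graphNorm (f x)) ∂μ := by
        rw [← lintegral_indicator hA]
        refine lintegral_congr fun x ↦ ?_
        by_cases hx : x ∈ A <;> simp [g, hx, Real.enorm_of_nonneg (graphNorm_nonneg _)]

lemma lintegral_graphNorm_le_liminf_mollify [CompleteSpace F] (hA : IsOpen A)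
    (hf : IntegrableOn f A μ) :
    ∫⁻ x in A, ENNReal.ofReal (graphNorm (f x)) ∂μ ≤
      liminf (fun k ↦ ∫⁻ x in innerParallelSet A (shrinkingBump E k).rOut,
        ENNReal.ofReal (graphNorm (mollify (shrinkingBump E k) μ (A.indicator f) x)) ∂μ) atTop := by
  have hloc : LocallyIntegrable (A.indicator f) μ :=
    (hf.integrable_indicator hA.measurableSet).locallyIntegrable
  have hcont : ∀ k, Continuous (mollify (shrinkingBump E k) μ (A.indicator f)) := fun k ↦
    (contDiff_mollify (n := 0) hloc).continuous
  set a : ℕ → E → ℝ≥0∞ := fun k ↦ (innerParallelSet A (shrinkingBump E k).rOut).indicator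
    fun x ↦ ENNReal.ofReal (graphNorm (mollify (shrinkingBump E k) μ (A.indicator f) x))
  have ha : ∀ k, Measurable (a k) := fun k ↦
    (ENNReal.continuous_ofReal.comp (continuous_graphNorm.comp (hcont k))).measurable.indicator
      isOpen_innerParallelSet.measurableSet
  have hlim : ∀ᵐ x ∂μ.restrict A,
      Tendsto (a · x) atTop (𝓝 (ENNReal.ofReal (graphNorm (f x)))) := by
    filter_upwards [ae_restrict_of_ae (ae_tendsto_mollify hloc), ae_restrict_mem hA.measurableSet]
      with x hx hxA
    rw [indicator_of_mem hxA] at hx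
    refine Tendsto.congr' ?_
      (ENNReal.tendsto_ofReal ((continuous_graphNorm.tendsto (f x)).comp hx))
    filter_upwards [eventually_mem_innerParallelSet hA (tendsto_rOut_shrinkingBump E) hxA] with k hk
    simp only [a, indicator_of_mem hk, Function.comp_apply]
  calc ∫⁻ x in A, ENNReal.ofReal (graphNorm (f x)) ∂μ
      = ∫⁻ x in A, liminf (a · x) atTop ∂μ :=
        lintegral_congr_ae (hlim.mono fun x hx ↦ hx.liminf_eq.symm)
    _ ≤ liminf (fun k ↦ ∫⁻ x in A, a k x ∂μ) atTop := lintegral_liminf_le fun k ↦ ha k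
    _ ≤ _ := liminf_le_liminf (.of_forall fun k ↦ (setLIntegral_le_lintegral _ _).trans_eq
        (lintegral_indicator isOpen_innerParallelSet.measurableSet _))

end Jensen

section GeneralizedDominatedConvergence

variable {X : Type*} [MeasurableSpace X] {μ : Measure X} {a b : ℕ → X → ℝ≥0∞} {α β : X → ℝ≥0∞}

/- Pratt's theorem: Fatou's lemma is applied to `b k - a k`. -/
lemma limsup_lintegral_le_of_tendsto_of_le (ha : ∀ k, AEMeasurable (a k) μ)
    (hb : ∀ k, AEMeasurable (b k) μ) (hab : ∀ k, a k ≤ᵐ[μ] b k)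
    (hα : ∀ᵐ x ∂μ, Tendsto (a · x) atTop (𝓝 (α x)))
    (hβ : ∀ᵐ x ∂μ, Tendsto (b · x) atTop (𝓝 (β x))) (hβ_meas : AEMeasurable β μ)
    (hβ_fin : ∫⁻ x, β x ∂μ ≠ ∞) (hle : ∀ k, ∫⁻ x, b k x ∂μ ≤ ∫⁻ x, β x ∂μ) :
    limsup (fun k ↦ ∫⁻ x, a k x ∂μ) atTop ≤ ∫⁻ x, α x ∂μ := by
  set I := ∫⁻ x, β x ∂μ
  have hsum : ∀ k, ∫⁻ x, a k x ∂μ + ∫⁻ x, b k x - a k x ∂μ ≤ I := fun k ↦ by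
    rw [← lintegral_add_left' (ha k)]
    exact (lintegral_mono_ae ((hab k).mono fun x hx ↦ (add_tsub_cancel_of_le hx).le)).trans (hle k)
  have hfatou : ∫⁻ x, β x - α x ∂μ ≤ liminf (fun k ↦ ∫⁻ x, b k x - a k x ∂μ) atTop := by
    refine le_trans (lintegral_mono_ae ?_) (lintegral_liminf_le' fun k ↦ (hb k).sub (ha k))
    filter_upwards [hα, hβ, ae_lt_top' hβ_meas hβ_fin] with x hαx hβx hx
    exact (ENNReal.Tendsto.sub hβx hαx (.inl hx.ne)).liminf_eq.ge
  have hI : I ≤ ∫⁻ x, α x ∂μ + ∫⁻ x, β x - α x ∂μ := by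
    have hα_meas : AEMeasurable α μ := aemeasurable_of_tendsto_metrizable_ae' ha hα
    rw [← lintegral_add_left' hα_meas]
    exact lintegral_mono fun x ↦ le_add_tsub
  calc limsup (fun k ↦ ∫⁻ x, a k x ∂μ) atTop
      ≤ limsup (fun k ↦ I - ∫⁻ x, b k x - a k x ∂μ) atTop :=
        limsup_le_limsup (.of_forall fun k ↦ ENNReal.le_sub_of_add_le_right
          (ne_top_of_le_ne_top hβ_fin (le_add_self.trans (hsum k))) (hsum k))
    _ = I - liminf (fun k ↦ ∫⁻ x, b k x - a k x ∂μ) atTop :=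
        ENNReal.limsup_const_sub _ _ hβ_fin
    _ ≤ I - ∫⁻ x, β x - α x ∂μ := tsub_le_tsub_left hfatou I
    _ ≤ ∫⁻ x, α x ∂μ := tsub_le_iff_right.2 hI

end GeneralizedDominatedConvergence

section Flatten

/-- The entries of `M` as a vector of `ℝ⁴`. The Frobenius norm of `M` is the Euclidean norm of this
vector. -/
def flatten (M : Matrix (Fin 2) (Fin 2) ℝ) : EuclideanSpace ℝ (Fin 2 × Fin 2) :=
  WithLp.toLp 2 fun p ↦ M p.1 p.2

lemma norm_flatten_sq (M : Matrix (Fin 2) (Fin 2) ℝ) : ‖flatten M‖ ^ 2 = ∑ i, ∑ j, M i j ^ 2 := by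
  simp only [EuclideanSpace.norm_sq_eq, Real.norm_eq_abs, sq_abs, Fintype.sum_prod_type, flatten]

lemma graphNorm_flatten (M : Matrix (Fin 2) (Fin 2) ℝ) :
    graphNorm (flatten M) = √(1 + ∑ i, ∑ j, M i j ^ 2) := by
  rw [graphNorm, norm_flatten_sq]

open scoped Matrix.Norms.Frobenius in
lemma norm_flatten_mul_le (M N : Matrix (Fin 2) (Fin 2) ℝ) :
    ‖flatten (M * N)‖ ≤ ‖flatten M‖ * ‖flatten N‖ := by
  have h : ∀ M : Matrix (Fin 2) (Fin 2) ℝ, ‖flatten M‖ = ‖M‖ := fun M ↦ by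
    rw [Matrix.frobenius_norm_def, ← Real.sqrt_eq_rpow, ← Real.sqrt_sq (norm_nonneg (flatten M)),
      norm_flatten_sq]
    simp only [Real.rpow_two, Real.norm_eq_abs, sq_abs]
  simpa only [h] using Matrix.frobenius_norm_mul M N

lemma ofReal_graphNorm_flatten_mul_le {M : Matrix (Fin 2) (Fin 2) ℝ} {K : ℝ} (hK : 1 ≤ K)
    (hM : ‖flatten M‖ ≤ K) (N : Matrix (Fin 2) (Fin 2) ℝ) :
    ENNReal.ofReal (graphNorm (flatten (M * N))) ≤
      ENNReal.ofReal K * ENNReal.ofReal (graphNorm (flatten N)) := by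
  rw [← ENNReal.ofReal_mul (zero_le_one.trans hK)]
  exact ENNReal.ofReal_le_ofReal <| graphNorm_le_mul hK <|
    (norm_flatten_mul_le M N).trans <| by gcongr

lemma continuous_flatten : Continuous flatten := by
  unfold flatten
  fun_prop

lemma tendsto_of_tendsto_flatten {ι : Type*} {l : Filter ι} {M : ι → Matrix (Fin 2) (Fin 2) ℝ}
    {N : Matrix (Fin 2) (Fin 2) ℝ} (h : Tendsto (fun k ↦ flatten (M k)) l (𝓝 (flatten N))) :
    Tendsto M l (𝓝 N) :=
  tendsto_pi_nhds.2 fun i ↦ tendsto_pi_nhds.2 fun j ↦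
    ((EuclideanSpace.proj (𝕜 := ℝ) (i, j)).continuous.tendsto _).comp h

lemma integrableOn_flatten {X : Type*} [MeasurableSpace X] {μ : Measure X}
    {G : X → Matrix (Fin 2) (Fin 2) ℝ} {A : Set X} (h : ∀ i j, IntegrableOn (G · i j) A μ) :
    IntegrableOn (fun x ↦ flatten (G x)) A μ :=
  .of_eval_piLp fun p ↦ h p.1 p.2

lemma continuousOn_jacobianMatrix {v : R2 → R2} {A : Set R2} (hA : IsOpen A)
    (hv : ContDiffOn ℝ 1 v A) : ContinuousOn (jacobianMatrix v) A := by
  have := hv.continuousOn_fderiv_of_isOpen hA le_rfl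
  unfold jacobianMatrix
  fun_prop

lemma continuous_jacobianMatrix {v : R2 → R2} (hv : ContDiff ℝ 1 v) :
    Continuous (jacobianMatrix v) :=
  continuousOn_univ.1 (continuousOn_jacobianMatrix isOpen_univ hv.contDiffOn)

end Flatten

section WeakGradient

variable {A B : Set R2} {u v : R2 → R2} {G : R2 → Matrix (Fin 2) (Fin 2) ℝ}

lemma setIntegral_mul_eq_integral {f ψ : R2 → ℝ} (hψ : tsupport ψ ⊆ A) :
    ∫ x in A, f x * ψ x = ∫ x, f x * ψ x :=
  setIntegral_eq_integral_of_forall_compl_eq_zero fun _ hx ↦ by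
    rw [image_eq_zero_of_notMem_tsupport fun h ↦ hx (hψ h), mul_zero]

lemma isWeakGradient_iff : IsWeakGradient A u G ↔
    ∀ ψ : R2 → ℝ, ContDiff ℝ (⊤ : ℕ∞) ψ → HasCompactSupport ψ → tsupport ψ ⊆ A → ∀ i j : Fin 2,
      ∫ x, u x i * fderiv ℝ ψ x (EuclideanSpace.single j 1) = - ∫ x, G x i j * ψ x := by
  refine forall₄_congr fun ψ _ _ hψA ↦ forall₂_congr fun i j ↦ ?_
  rw [setIntegral_mul_eq_integral hψA,
    setIntegral_mul_eq_integral ((tsupport_fderiv_apply_subset ℝ _).trans hψA)]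

lemma memW11_mono (hBA : B ⊆ A) (h : MemW11 A u G) : MemW11 B u G :=
  ⟨h.1.mono_set hBA, fun i j ↦ (h.2.1 i j).mono_set hBA, isWeakGradient_iff.2
    fun ψ hψ hψc hψB ↦ isWeakGradient_iff.1 h.2.2 ψ hψ hψc (hψB.trans hBA)⟩

lemma integrable_mul_of_tsupport_subset {f ψ : R2 → ℝ} (hf : ContinuousOn f A) (hψ : Continuous ψ)
    (hψc : HasCompactSupport ψ) (hψA : tsupport ψ ⊆ A) : Integrable fun x ↦ f x * ψ x := by
  refine (integrableOn_iff_integrable_of_support_subset ?_).1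
    (((hf.mono hψA).mul hψ.continuousOn).integrableOn_compact hψc)
  exact (Function.support_mul_subset_right _ _).trans (subset_tsupport ψ)

lemma isWeakGradient_jacobianMatrix (hA : IsOpen A) (hv : ContDiffOn ℝ 1 v A) :
    IsWeakGradient A v (jacobianMatrix v) := by
  refine isWeakGradient_iff.2 fun ψ hψ hψc hψA i j ↦ ?_
  set e : R2 := EuclideanSpace.single j 1
  have hvi : ContDiffOn ℝ 1 (fun x ↦ v x i) A :=
    (EuclideanSpace.proj (𝕜 := ℝ) i).contDiff.comp_contDiffOn hv
  have hdiff : ∀ x ∈ A, HasFDerivAt v (fderiv ℝ v x) x := fun x hx ↦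
    ((hv.contDiffAt (hA.mem_nhds hx)).differentiableAt one_ne_zero).hasFDerivAt
  have hdv : ContinuousOn (fun x ↦ jacobianMatrix v x i j) A :=
    continuousOn_pi.1 (continuousOn_pi.1 (continuousOn_jacobianMatrix hA hv) i) j
  have hdψ : Continuous fun x ↦ fderiv ℝ ψ x e :=
    (hψ.continuous_fderiv (by simp)).clm_apply continuous_const
  exact integral_bilinear_hasLineDerivAt_right_eq_neg_left_of_integrable
    (B := ContinuousLinearMap.mul ℝ ℝ)
    (integrable_mul_of_tsupport_subset hdv hψ.continuous hψc hψA)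
    (integrable_mul_of_tsupport_subset hvi.continuousOn hdψ (hψc.fderiv_apply ℝ e)
      ((tsupport_fderiv_apply_subset ℝ e).trans hψA))
    (integrable_mul_of_tsupport_subset hvi.continuousOn hψ.continuous hψc hψA)
    (fun x hx ↦ ((EuclideanSpace.proj (𝕜 := ℝ) i).hasFDerivAt.comp x
      (hdiff x (hψA hx))).hasLineDerivAt e)
    (fun x _ ↦ (hψ.differentiable (by simp) x).hasFDerivAt.hasLineDerivAt e)

variable {φ : ContDiffBump (0 : R2)} {x : R2}

lemma tsupport_normed_sub (φ : ContDiffBump (0 : R2)) (x : R2) :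
    tsupport (fun t ↦ φ.normed volume (x - t)) = closedBall x φ.rOut := by
  have h := tsupport_comp_eq_preimage (φ.normed volume) (Homeomorph.subLeft x)
  rw [φ.tsupport_normed_eq] at h
  refine h.trans (Set.ext fun t ↦ ?_)
  rw [mem_preimage, Homeomorph.subLeft_apply, mem_closedBall_zero_iff, ← dist_eq_norm,
    mem_closedBall_comm, mem_closedBall]

lemma fderiv_normed_sub (φ : ContDiffBump (0 : R2)) (x t e : R2) :
    fderiv ℝ (fun t ↦ φ.normed volume (x - t)) t e = - fderiv ℝ (φ.normed volume) (x - t) e := by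
  have hφ : DifferentiableAt ℝ (φ.normed volume) (x - t) :=
    (φ.contDiff_normed (n := 1)).differentiable one_ne_zero _
  have h := hφ.hasFDerivAt.comp t ((hasFDerivAt_id t).const_sub x)
  rw [show (fun t ↦ φ.normed volume (x - t)) = φ.normed volume ∘ fun t ↦ x - t from rfl, h.fderiv]
  simp

lemma jacobianMatrix_mollify (hA : MeasurableSet A) (h : MemW11 A u G)
    (hx : closedBall x φ.rOut ⊆ A) (i j : Fin 2) :
    jacobianMatrix (mollify φ volume (A.indicator u)) x i j =
      mollify φ volume (A.indicator (G · i j)) x := by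
  have hu : Integrable (A.indicator u) := h.1.integrable_indicator hA
  set e : R2 := EuclideanSpace.single j 1
  set L : R2 →L[ℝ] ℝ := EuclideanSpace.proj i
  set ψ : R2 → ℝ := fun t ↦ φ.normed volume (x - t)
  have hψ : ContDiff ℝ (⊤ : ℕ∞) ψ := φ.contDiff_normed.comp (contDiff_const.sub contDiff_id)
  have hψA : tsupport ψ ⊆ A := (tsupport_normed_sub φ x).trans_subset hx
  have hψc : HasCompactSupport ψ := by
    rw [HasCompactSupport, tsupport_normed_sub]
    exact isCompact_closedBall _ _
  calc jacobianMatrix (mollify φ volume (A.indicator u)) x i j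
      = ∫ t, fderiv ℝ (φ.normed volume) (x - t) e • A.indicator u t i :=
        (fderiv_mollify_continuousLinearMap_comp L hu.locallyIntegrable x e).symm.trans
          (fderiv_mollify_apply (L.integrable_comp hu).locallyIntegrable x e)
    _ = - ∫ t in A, u t i * fderiv ℝ ψ t e := by
        rw [← integral_neg, ← integral_indicator hA]
        refine integral_congr_ae (.of_forall fun t ↦ ?_)
        by_cases ht : t ∈ A <;> simp [ht, ψ, fderiv_normed_sub, mul_comm]
    _ = ∫ t in A, G t i j * ψ t := by rw [h.2.2 ψ hψ hψc hψA i j, neg_neg]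
    _ = mollify φ volume (A.indicator (G · i j)) x := by
        rw [mollify_apply, ← integral_indicator hA]
        refine integral_congr_ae (.of_forall fun t ↦ ?_)
        by_cases ht : t ∈ A <;> simp [ht, ψ, mul_comm]

lemma flatten_jacobianMatrix_mollify (hA : MeasurableSet A) (h : MemW11 A u G)
    (hx : closedBall x φ.rOut ⊆ A) :
    flatten (jacobianMatrix (mollify φ volume (A.indicator u)) x) =
      mollify φ volume (A.indicator fun t ↦ flatten (G t)) x := by
  have hG : LocallyIntegrable (A.indicator fun t ↦ flatten (G t)) :=
    ((integrableOn_flatten h.2.1).integrable_indicator hA).locallyIntegrable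
  ext ⟨i, j⟩
  refine ((jacobianMatrix_mollify hA h hx i j).trans ?_).trans
    (mollify_continuousLinearMap_comp (EuclideanSpace.proj (𝕜 := ℝ) (i, j)) hG x)
  congr 1
  ext t
  by_cases ht : t ∈ A <;> simp [ht, flatten]

end WeakGradient

section LowerBound

variable {A : Set R2} {u v : R2 → R2} {G : R2 → Matrix (Fin 2) (Fin 2) ℝ}

lemma lintegral_graphNorm_le_classicalArea (A : Set R2) (v : R2 → R2) :
    ∫⁻ x in A, ENNReal.ofReal (graphNorm (flatten (jacobianMatrix v x))) ≤ classicalArea A v := by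
  refine lintegral_mono fun x ↦ ENNReal.ofReal_le_ofReal ?_
  rw [graphNorm_flatten]
  exact Real.sqrt_le_sqrt (le_add_of_nonneg_right (sq_nonneg _))

lemma memW11_jacobianMatrix (hA : IsOpen A) (hv : ContDiffOn ℝ 1 v A) (hvi : IntegrableOn v A)
    (harea : classicalArea A v ≠ ∞) : MemW11 A v (jacobianMatrix v) := by
  have hcont : ContinuousOn (fun x ↦ flatten (jacobianMatrix v x)) A :=
    continuous_flatten.comp_continuousOn (continuousOn_jacobianMatrix hA hv)
  have hint : IntegrableOn (fun x ↦ flatten (jacobianMatrix v x)) A := by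
    refine ⟨hcont.aestronglyMeasurable hA.measurableSet, lt_of_le_of_lt ?_ harea.lt_top⟩
    refine le_trans (lintegral_mono fun x ↦ ?_) (lintegral_graphNorm_le_classicalArea A v)
    rw [← ofReal_norm]
    exact ENNReal.ofReal_le_ofReal (norm_le_graphNorm _)
  exact ⟨hvi, fun i j ↦ hint.eval_piLp (i, j), isWeakGradient_jacobianMatrix hA hv⟩

lemma lintegral_graphNorm_jacobianMatrix_mollify_le (φ : ContDiffBump (0 : R2)) (hA : IsOpen A)
    (hv : ContDiffOn ℝ 1 v A) (hvi : IntegrableOn v A) :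
    ∫⁻ x in innerParallelSet A φ.rOut, ENNReal.ofReal
      (graphNorm (flatten (jacobianMatrix (mollify φ volume (A.indicator v)) x))) ≤
        classicalArea A v := by
  by_cases harea : classicalArea A v = ∞
  · exact harea ▸ le_top
  have hW := memW11_jacobianMatrix hA hv hvi harea
  refine le_trans (setLIntegral_mono' isOpen_innerParallelSet.measurableSet fun x hx ↦ ?_)
    ((lintegral_graphNorm_mollify_le hA.measurableSet (integrableOn_flatten hW.2.1)).trans
      (lintegral_graphNorm_le_classicalArea A v))
  rw [flatten_jacobianMatrix_mollify hA.measurableSet hW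
    (closedBall_subset_of_mem_innerParallelSet hx)]

lemma tendsto_jacobianMatrix_mollify {φ : ContDiffBump (0 : R2)} {w : ℕ → R2 → R2}
    (hA : MeasurableSet A) (hu : IntegrableOn u A) (hw : ∀ l, IntegrableOn (w l) A)
    (h : Tendsto (fun l ↦ ∫ x in A, ‖w l x - u x‖) atTop (𝓝 0)) (x : R2) :
    Tendsto (fun l ↦ jacobianMatrix (mollify φ volume (A.indicator (w l))) x) atTop
      (𝓝 (jacobianMatrix (mollify φ volume (A.indicator u)) x)) := by
  have hint : ∀ l, ∫ t, ‖A.indicator (w l) t - A.indicator u t‖ = ∫ t in A, ‖w l t - u t‖ := by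
    intro l
    rw [← integral_indicator hA]
    refine integral_congr_ae (.of_forall fun t ↦ ?_)
    by_cases ht : t ∈ A <;> simp [ht]
  refine tendsto_pi_nhds.2 fun i ↦ tendsto_pi_nhds.2 fun j ↦ ?_
  exact ((EuclideanSpace.proj (𝕜 := ℝ) i).continuous.tendsto _).comp
    (tendsto_fderiv_mollify (hu.integrable_indicator hA) (fun l ↦ (hw l).integrable_indicator hA)
      (by simpa only [hint] using h) x (EuclideanSpace.single j 1))

lemma lintegral_graphNorm_le_relaxedArea (hA : IsOpen A) (hu : MemW11 A u G) :
    ∫⁻ x in A, ENNReal.ofReal (graphNorm (flatten (G x))) ≤ relaxedArea u A := by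
  refine le_sInf ?_
  rintro a ⟨w, hw, hwu, hlim, rfl⟩
  have hwi : ∀ l, IntegrableOn (w l) A := fun l ↦
    ((hwu l).add hu.1).congr (.of_forall fun x ↦ sub_add_cancel _ _)
  refine (lintegral_graphNorm_le_liminf_mollify hA (integrableOn_flatten hu.2.1)).trans
    (liminf_le_of_le (by isBoundedDefault) fun b hb ↦ ?_)
  obtain ⟨k, hk⟩ := hb.exists
  refine hk.trans ?_
  set φ := shrinkingBump R2 k
  set K := innerParallelSet A φ.rOut
  set J : ℕ → R2 → Matrix (Fin 2) (Fin 2) ℝ := fun l ↦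
    jacobianMatrix (mollify φ volume (A.indicator (w l)))
  have hmeas : ∀ l, Measurable fun x ↦ ENNReal.ofReal (graphNorm (flatten (J l x))) := fun l ↦
    (ENNReal.continuous_ofReal.comp (continuous_graphNorm.comp (continuous_flatten.comp
      (continuous_jacobianMatrix (contDiff_mollify
        ((hwi l).integrable_indicator hA.measurableSet).locallyIntegrable))))).measurable
  calc ∫⁻ x in K, ENNReal.ofReal
        (graphNorm (mollify φ volume (A.indicator fun x ↦ flatten (G x)) x))
      = ∫⁻ x in K, liminf (fun l ↦ ENNReal.ofReal (graphNorm (flatten (J l x)))) atTop := by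
        refine setLIntegral_congr_fun isOpen_innerParallelSet.measurableSet fun x hx ↦ ?_
        rw [← flatten_jacobianMatrix_mollify hA.measurableSet hu
          (closedBall_subset_of_mem_innerParallelSet hx)]
        refine (Tendsto.liminf_eq (ENNReal.tendsto_ofReal ?_)).symm
        exact ((continuous_graphNorm.comp continuous_flatten).tendsto _).comp
          (tendsto_jacobianMatrix_mollify hA.measurableSet hu.1 hwi hlim x)
    _ ≤ liminf (fun l ↦ ∫⁻ x in K, ENNReal.ofReal (graphNorm (flatten (J l x)))) atTop :=
        lintegral_liminf_le hmeas
    _ ≤ liminf (fun l ↦ classicalArea A (w l)) atTop :=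
        liminf_le_liminf (.of_forall fun l ↦
          lintegral_graphNorm_jacobianMatrix_mollify_le φ hA (hw l) (hwi l))

lemma lintegral_graphNorm_le_envA {Ω V : Set R2} (hu : MemW11 Ω u G) :
    ∫⁻ x in V, ENNReal.ofReal (graphNorm (flatten (G x))) ≤ envA u Ω V := by
  refine le_sInf ?_
  rintro a ⟨A, hA, hVA, rfl⟩
  calc ∫⁻ x in V, ENNReal.ofReal (graphNorm (flatten (G x)))
      ≤ ∫⁻ x in ⋃ k, A k, ENNReal.ofReal (graphNorm (flatten (G x))) := lintegral_mono_set hVA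
    _ ≤ ∑' k, ∫⁻ x in A k, ENNReal.ofReal (graphNorm (flatten (G x))) := lintegral_iUnion_le _ _
    _ ≤ ∑' k, relaxedArea u (A k) := ENNReal.tsum_le_tsum fun k ↦
        lintegral_graphNorm_le_relaxedArea (hA k).1 (memW11_mono (hA k).2 hu)

end LowerBound

section CutArg

lemma hasFDerivAt_arg {z : ℂ} (hz : z ∈ Complex.slitPlane) :
    HasFDerivAt Complex.arg (Complex.imCLM.comp (z⁻¹ • (1 : ℂ →L[ℝ] ℂ))) z := by
  simpa only [Function.comp_def, Complex.imCLM_apply, Complex.log_im] using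
    (Complex.imCLM.hasStrictFDerivAt.comp z (Complex.hasStrictFDerivAt_log_real hz)).hasFDerivAt

lemma contDiffAt_arg {z : ℂ} (hz : z ∈ Complex.slitPlane) : ContDiffAt ℝ 1 Complex.arg z := by
  simpa only [Function.comp_def, Complex.imCLM_apply, Complex.log_im] using
    Complex.imCLM.contDiff.contDiffAt.comp z
      ((Complex.contDiffAt_log (n := 1) hz).restrict_scalars ℝ)

lemma norm_fderiv_arg_le {z : ℂ} (hz : z ∈ Complex.slitPlane) :
    ‖fderiv ℝ Complex.arg z‖ ≤ ‖z‖⁻¹ := by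
  rw [(hasFDerivAt_arg hz).fderiv]
  refine (ContinuousLinearMap.opNorm_comp_le _ _).trans ?_
  rw [Complex.imCLM_norm, one_mul, norm_smul, norm_inv, norm_one, mul_one]

lemma norm_fderiv_mul_le {E : Type*} [NormedAddCommGroup E] [NormedSpace ℝ E] {f g : E → ℝ}
    {x : E} (hf : DifferentiableAt ℝ f x) (hg : DifferentiableAt ℝ g x) :
    ‖fderiv ℝ (fun y ↦ f y * g y) x‖ ≤ |f x| * ‖fderiv ℝ g x‖ + |g x| * ‖fderiv ℝ f x‖ := by
  rw [fderiv_fun_mul hf hg]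
  refine (norm_add_le _ _).trans_eq ?_
  rw [norm_smul, norm_smul, Real.norm_eq_abs, Real.norm_eq_abs]

lemma exists_norm_deriv_smoothTransition_le :
    ∃ C, 0 ≤ C ∧ ∀ t, ‖deriv Real.smoothTransition t‖ ≤ C := by
  have hsupp : HasCompactSupport (deriv Real.smoothTransition) := by
    refine .intro (isCompact_Icc (a := (0 : ℝ)) (b := 1)) fun t ht ↦ ?_
    rw [mem_Icc, not_and_or, not_le, not_le] at ht
    rcases ht with ht | ht
    · have : Real.smoothTransition =ᶠ[𝓝 t] fun _ ↦ 0 := by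
        filter_upwards [eventually_lt_nhds ht] with s hs
        exact Real.smoothTransition.zero_of_nonpos hs.le
      rw [this.deriv_eq, deriv_const]
    · have : Real.smoothTransition =ᶠ[𝓝 t] fun _ ↦ 1 := by
        filter_upwards [eventually_gt_nhds ht] with s hs
        exact Real.smoothTransition.one_of_one_le hs.le
      rw [this.deriv_eq, deriv_const]
  obtain ⟨C, hC⟩ := hsupp.exists_bound_of_continuous
    ((Real.smoothTransition.contDiff (n := 1)).continuous_deriv le_rfl)
  exact ⟨C, (norm_nonneg _).trans (hC 0), hC⟩

lemma exists_norm_fderiv_smoothTransition_comp_le {E : Type*} [NormedAddCommGroup E]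
    [NormedSpace ℝ E] (L : E →L[ℝ] ℝ) (c : ℝ) :
    ∃ C, 0 ≤ C ∧ ∀ x, ‖fderiv ℝ (fun x ↦ Real.smoothTransition (c + L x)) x‖ ≤ C := by
  obtain ⟨C, hC₀, hC⟩ := exists_norm_deriv_smoothTransition_le
  refine ⟨C * ‖L‖, by positivity, fun x ↦ ?_⟩
  have hst : DifferentiableAt ℝ Real.smoothTransition (c + L x) :=
    (Real.smoothTransition.contDiff (n := 1)).differentiable one_ne_zero _
  have hder := hst.hasDerivAt.comp_hasFDerivAt x (L.hasFDerivAt.const_add c)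
  rw [Function.comp_def] at hder
  rw [hder.fderiv, norm_smul]
  gcongr
  exact hC _

/-- A smooth cutoff on `ℂ` that vanishes near the cut `(-∞, 0]` of `Complex.arg`. -/
def slitCutoff (z : ℂ) : ℝ :=
  1 - Real.smoothTransition (2 + 2 * z.im) * Real.smoothTransition (2 - 2 * z.im) *
    Real.smoothTransition (2 - 2 * z.re)

lemma contDiff_slitCutoff : ContDiff ℝ 1 slitCutoff := by
  have him : ContDiff ℝ 1 Complex.im := Complex.imCLM.contDiff
  have hre : ContDiff ℝ 1 Complex.re := Complex.reCLM.contDiff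
  unfold slitCutoff
  fun_prop

lemma abs_slitCutoff_le_one (z : ℂ) : |slitCutoff z| ≤ 1 := by
  have h : ∀ t, Real.smoothTransition t ∈ Icc (0 : ℝ) 1 := fun t ↦
    ⟨Real.smoothTransition.nonneg t, Real.smoothTransition.le_one t⟩
  have hmem := unitInterval.mul_mem (unitInterval.mul_mem (h (2 + 2 * z.im)) (h (2 - 2 * z.im)))
    (h (2 - 2 * z.re))
  exact abs_le.2 ⟨by unfold slitCutoff; linarith [hmem.2], sub_le_self _ hmem.1⟩

lemma slitCutoff_eq_zero {z : ℂ} (him : |z.im| ≤ 1 / 2) (hre : z.re ≤ 1 / 2) :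
    slitCutoff z = 0 := by
  rw [abs_le] at him
  unfold slitCutoff
  rw [Real.smoothTransition.one_of_one_le (by linarith),
    Real.smoothTransition.one_of_one_le (by linarith),
    Real.smoothTransition.one_of_one_le (by linarith)]
  norm_num

lemma slitCutoff_eq_one {z : ℂ} (hz : 1 < |z.im| ∨ 1 < z.re) : slitCutoff z = 1 := by
  unfold slitCutoff
  rw [lt_abs] at hz
  rcases hz with (him | him) | hre
  · simp [Real.smoothTransition.zero_of_nonpos (show 2 - 2 * z.im ≤ 0 by linarith)]
  · simp [Real.smoothTransition.zero_of_nonpos (show 2 + 2 * z.im ≤ 0 by linarith)]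
  · simp [Real.smoothTransition.zero_of_nonpos (show 2 - 2 * z.re ≤ 0 by linarith)]

lemma exists_norm_fderiv_slitCutoff_le : ∃ C, 0 ≤ C ∧ ∀ z, ‖fderiv ℝ slitCutoff z‖ ≤ C := by
  have hdiff : ∀ L : ℂ →L[ℝ] ℝ, Differentiable ℝ fun z ↦ Real.smoothTransition (2 + L z) :=
    fun L ↦ ((Real.smoothTransition.contDiff (n := 1)).differentiable one_ne_zero).comp
      (L.differentiable.const_add 2)
  have hle : ∀ t, |Real.smoothTransition t| ≤ 1 := fun t ↦ by
    rw [abs_of_nonneg (Real.smoothTransition.nonneg t)]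
    exact Real.smoothTransition.le_one t
  set L₁ : ℂ →L[ℝ] ℝ := (2 : ℝ) • Complex.imCLM
  set L₂ : ℂ →L[ℝ] ℝ := -((2 : ℝ) • Complex.imCLM)
  set L₃ : ℂ →L[ℝ] ℝ := -((2 : ℝ) • Complex.reCLM)
  obtain ⟨C₁, hC₁₀, hC₁⟩ := exists_norm_fderiv_smoothTransition_comp_le L₁ 2
  obtain ⟨C₂, hC₂₀, hC₂⟩ := exists_norm_fderiv_smoothTransition_comp_le L₂ 2
  obtain ⟨C₃, hC₃₀, hC₃⟩ := exists_norm_fderiv_smoothTransition_comp_le L₃ 2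
  refine ⟨1 * C₃ + 1 * (1 * C₂ + 1 * C₁), by positivity, fun z ↦ ?_⟩
  have hχ : slitCutoff = fun z ↦ 1 - Real.smoothTransition (2 + L₁ z) *
      Real.smoothTransition (2 + L₂ z) * Real.smoothTransition (2 + L₃ z) := by
    ext z
    simp [slitCutoff, L₁, L₂, L₃, sub_eq_add_neg]
  rw [hχ, fderiv_const_sub, norm_neg]
  refine (norm_fderiv_mul_le ((hdiff L₁).fun_mul (hdiff L₂) z) (hdiff L₃ z)).trans ?_
  gcongr
  · rw [abs_mul]
    exact mul_le_one₀ (hle _) (abs_nonneg _) (hle _)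
  · exact hC₃ z
  · exact hle _
  · refine (norm_fderiv_mul_le (hdiff L₁ z) (hdiff L₂ z)).trans ?_
    gcongr
    exacts [hle _, hC₂ z, hle _, hC₁ z]

/-- The argument, smoothly cut off near its branch cut. -/
def cutArg (z : ℂ) : ℝ := slitCutoff z * Complex.arg z

lemma cutArg_eventuallyEq_zero {z : ℂ} (hz : z ∉ Complex.slitPlane) : cutArg =ᶠ[𝓝 z] 0 := by
  rw [Complex.mem_slitPlane_iff, not_or, not_lt, not_not] at hz
  have him : ∀ᶠ w : ℂ in 𝓝 z, |w.im| < 1 / 2 :=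
    Complex.continuous_im.abs.continuousAt.eventually_lt_const (by norm_num [hz.2])
  have hre : ∀ᶠ w : ℂ in 𝓝 z, w.re < 1 / 2 :=
    Complex.continuous_re.continuousAt.eventually_lt_const (by linarith [hz.1])
  filter_upwards [him, hre] with w hwim hwre
  rw [cutArg, slitCutoff_eq_zero hwim.le hwre.le, zero_mul, Pi.zero_apply]

lemma cutArg_eventuallyEq_arg {z : ℂ} (hz : 1 < |z.im| ∨ 1 < z.re) :
    cutArg =ᶠ[𝓝 z] Complex.arg := by
  have hopen : ∀ᶠ w : ℂ in 𝓝 z, 1 < |w.im| ∨ 1 < w.re := by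
    rcases hz with him | hre
    · exact (Complex.continuous_im.abs.continuousAt.eventually_const_lt him).mono fun _ ↦ Or.inl
    · exact (Complex.continuous_re.continuousAt.eventually_const_lt hre).mono fun _ ↦ Or.inr
  filter_upwards [hopen] with w hw
  rw [cutArg, slitCutoff_eq_one hw, one_mul]

lemma contDiff_cutArg : ContDiff ℝ 1 cutArg := by
  refine contDiff_iff_contDiffAt.2 fun z ↦ ?_
  by_cases hz : z ∈ Complex.slitPlane
  · exact contDiff_slitCutoff.contDiffAt.mul (contDiffAt_arg hz)
  · exact contDiffAt_const.congr_of_eventuallyEq (cutArg_eventuallyEq_zero hz)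

lemma abs_slitCutoff_mul_inv_norm_le (z : ℂ) : |slitCutoff z| * ‖z‖⁻¹ ≤ 2 := by
  by_cases hz : |z.im| ≤ 1 / 2 ∧ z.re ≤ 1 / 2
  · rw [slitCutoff_eq_zero hz.1 hz.2, abs_zero, zero_mul]
    exact zero_le_two
  · have hnorm : 1 / 2 ≤ ‖z‖ := by
      rw [not_and_or, not_le, not_le] at hz
      rcases hz with him | hre
      · exact him.le.trans (Complex.abs_im_le_norm z)
      · exact hre.le.trans (Complex.re_le_norm z)
    calc |slitCutoff z| * ‖z‖⁻¹ ≤ 1 * (1 / 2)⁻¹ := by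
          gcongr
          exact abs_slitCutoff_le_one z
      _ = 2 := by norm_num

lemma exists_norm_fderiv_cutArg_le : ∃ C, 0 ≤ C ∧ ∀ z, ‖fderiv ℝ cutArg z‖ ≤ C := by
  obtain ⟨C, hC₀, hC⟩ := exists_norm_fderiv_slitCutoff_le
  have hC' : 0 ≤ 2 + Real.pi * C := by positivity
  refine ⟨2 + Real.pi * C, hC', fun z ↦ ?_⟩
  by_cases hz : z ∈ Complex.slitPlane
  · calc ‖fderiv ℝ cutArg z‖
        ≤ |slitCutoff z| * ‖fderiv ℝ Complex.arg z‖ +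
            |Complex.arg z| * ‖fderiv ℝ slitCutoff z‖ :=
          norm_fderiv_mul_le (contDiff_slitCutoff.differentiable one_ne_zero z)
            (hasFDerivAt_arg hz).differentiableAt
      _ ≤ |slitCutoff z| * ‖z‖⁻¹ + Real.pi * C := by
          gcongr
          exacts [norm_fderiv_arg_le hz, Complex.abs_arg_le_pi z, hC z]
      _ ≤ 2 + Real.pi * C := by gcongr; exact abs_slitCutoff_mul_inv_norm_le z
  · rw [(cutArg_eventuallyEq_zero hz).fderiv_eq]
    simpa using hC'

end CutArg

section CutMap

lemma sum_sq_apply_single_eq_norm_sq (L : R2 →L[ℝ] ℝ) :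
    ∑ j, L (EuclideanSpace.single j 1) ^ 2 = ‖L‖ ^ 2 := by
  rw [← (InnerProductSpace.toDual ℝ R2).symm.norm_map L, EuclideanSpace.norm_sq_eq]
  refine Finset.sum_congr rfl fun j _ ↦ ?_
  rw [← InnerProductSpace.toDual_symm_apply (x := EuclideanSpace.single j 1), real_inner_comm,
    EuclideanSpace.inner_single_left, Real.norm_eq_abs, sq_abs]
  simp

variable {Φ : R2 → R2} {L : R2 →L[ℝ] ℝ} {v y : R2}

lemma jacobianMatrix_of_hasFDerivAt_smulRight (h : HasFDerivAt Φ (L.smulRight v) y) :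
    jacobianMatrix Φ y = Matrix.vecMulVec v fun j ↦ L (EuclideanSpace.single j 1) := by
  ext i j
  simp [jacobianMatrix, h.fderiv, Matrix.vecMulVec_apply, mul_comm]

lemma det_jacobianMatrix_of_hasFDerivAt_smulRight (h : HasFDerivAt Φ (L.smulRight v) y) :
    (jacobianMatrix Φ y).det = 0 := by
  rw [jacobianMatrix_of_hasFDerivAt_smulRight h, Matrix.det_vecMulVec]

lemma norm_flatten_jacobianMatrix_of_hasFDerivAt_smulRight
    (h : HasFDerivAt Φ (L.smulRight v) y) : ‖flatten (jacobianMatrix Φ y)‖ = ‖v‖ * ‖L‖ := by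
  rw [← sq_eq_sq₀ (norm_nonneg _) (by positivity), mul_pow, norm_flatten_sq,
    ← sum_sq_apply_single_eq_norm_sq, EuclideanSpace.norm_sq_eq, Finset.sum_mul_sum,
    jacobianMatrix_of_hasFDerivAt_smulRight h]
  simp only [Matrix.vecMulVec_apply, mul_pow, Real.norm_eq_abs, sq_abs]

/-- A smooth map of the plane into the unit circle. It fixes the points of the circle at distance
more than `2 * δ` from `e (-1)`, and its derivative is of order `δ⁻¹`. The isometry `e` rotates the
branch cut of the argument. -/
def cutMap (e : ℂ ≃ₗᵢ[ℝ] R2) (δ : ℝ) (y : R2) : R2 :=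
  e (Complex.exp (cutArg (δ⁻¹ • e.symm y) * Complex.I))

variable (e : ℂ ≃ₗᵢ[ℝ] R2) {δ : ℝ}

lemma norm_cutMap (δ : ℝ) (y : R2) : ‖cutMap e δ y‖ = 1 := by
  rw [cutMap, e.norm_map, Complex.norm_exp_ofReal_mul_I]

lemma contDiff_cutMap (δ : ℝ) : ContDiff ℝ 1 (cutMap e δ) := by
  have harg : ContDiff ℝ 1 fun y ↦ cutArg (δ⁻¹ • e.symm y) :=
    contDiff_cutArg.comp (e.symm.contDiff.const_smul δ⁻¹)
  exact e.contDiff.comp ((Complex.ofRealCLM.contDiff.comp harg).mul contDiff_const).cexp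

lemma hasFDerivAt_cutMap (δ : ℝ) (y : R2) :
    HasFDerivAt (cutMap e δ)
      (((fderiv ℝ cutArg (δ⁻¹ • e.symm y)).comp
        (δ⁻¹ • (e.symm.toContinuousLinearEquiv : R2 →L[ℝ] ℂ))).smulRight
          (e (Complex.exp (cutArg (δ⁻¹ • e.symm y) * Complex.I) * Complex.I))) y := by
  have harg : HasFDerivAt (fun y ↦ cutArg (δ⁻¹ • e.symm y)) _ y :=
    (contDiff_cutArg.differentiable one_ne_zero _).hasFDerivAt.comp y
      ((e.symm.toContinuousLinearEquiv : R2 →L[ℝ] ℂ).hasFDerivAt.const_smul δ⁻¹)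
  have hexp : HasDerivAt (fun θ : ℝ ↦ e (Complex.exp (θ * Complex.I)))
      (e (Complex.exp (cutArg (δ⁻¹ • e.symm y) * Complex.I) * Complex.I))
      (cutArg (δ⁻¹ • e.symm y)) := by
    have hmul : HasDerivAt (fun θ : ℝ ↦ (θ : ℂ) * Complex.I) Complex.I
        (cutArg (δ⁻¹ • e.symm y)) := by
      simpa using (Complex.ofRealCLM.hasDerivAt (x := cutArg (δ⁻¹ • e.symm y))).mul_const Complex.I
    exact (e.toContinuousLinearEquiv : ℂ →L[ℝ] R2).hasFDerivAt.comp_hasDerivAt _ hmul.cexp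
  exact hexp.hasFDerivAt.comp y harg

lemma det_jacobianMatrix_cutMap (δ : ℝ) (y : R2) : (jacobianMatrix (cutMap e δ) y).det = 0 :=
  det_jacobianMatrix_of_hasFDerivAt_smulRight (hasFDerivAt_cutMap e δ y)

lemma norm_flatten_jacobianMatrix_cutMap_le (hδ : 0 < δ) (y : R2) :
    ‖flatten (jacobianMatrix (cutMap e δ) y)‖ ≤ ‖fderiv ℝ cutArg (δ⁻¹ • e.symm y)‖ / δ := by
  have he : ‖(e.symm.toContinuousLinearEquiv : R2 →L[ℝ] ℂ)‖ ≤ 1 :=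
    ContinuousLinearMap.opNorm_le_bound _ zero_le_one fun y ↦ by simp
  rw [norm_flatten_jacobianMatrix_of_hasFDerivAt_smulRight (hasFDerivAt_cutMap e δ y), e.norm_map,
    norm_mul, Complex.norm_exp_ofReal_mul_I, Complex.norm_I, one_mul, one_mul]
  refine (ContinuousLinearMap.opNorm_comp_le _ _).trans ?_
  rw [norm_smul, Real.norm_of_nonneg (inv_nonneg.2 hδ.le), div_eq_mul_inv]
  gcongr
  exact mul_le_of_le_one_right (inv_nonneg.2 hδ.le) he

lemma lt_abs_im_or_lt_re_of_lt_norm_add_one {z : ℂ} (hδ : 0 < δ) (hδ' : δ ≤ 1 / 8) (hz : ‖z‖ = 1)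
    (h : 2 * δ < ‖z + 1‖) : δ < |z.im| ∨ δ < z.re := by
  by_contra! hcon
  have hz₁ : z.re ^ 2 + z.im ^ 2 = 1 := by
    rw [← one_pow 2, ← hz, Complex.sq_norm, Complex.normSq_apply, sq, sq]
  have him : z.im ^ 2 ≤ δ ^ 2 := sq_le_sq.2 (by rw [abs_of_pos hδ]; exact hcon.1)
  have hnorm : (2 * δ) ^ 2 < (z.re + 1) ^ 2 + z.im ^ 2 := by
    have := pow_lt_pow_left₀ h (by positivity) two_ne_zero
    simpa [Complex.sq_norm, Complex.normSq_apply, ← sq] using this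
  nlinarith

lemma one_lt_abs_im_or_one_lt_re_inv_smul (hδ : 0 < δ) (hδ' : δ ≤ 1 / 8) (hy : ‖y‖ = 1)
    (hey : 2 * δ < dist y (e (-1))) :
    1 < |(δ⁻¹ • e.symm y).im| ∨ 1 < (δ⁻¹ • e.symm y).re := by
  have hdist : dist y (e (-1)) = ‖e.symm y + 1‖ := by
    rw [← e.symm.dist_map, e.symm_apply_apply, dist_eq_norm, sub_neg_eq_add]
  have hz : ‖e.symm y‖ = 1 := by rw [e.symm.norm_map, hy]
  simp only [Complex.smul_im, Complex.smul_re, smul_eq_mul, ← div_eq_inv_mul, abs_div,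
    abs_of_pos hδ, one_lt_div hδ]
  exact lt_abs_im_or_lt_re_of_lt_norm_add_one hδ hδ' hz (hdist ▸ hey)

lemma cutMap_eq_self (hδ : 0 < δ) (hδ' : δ ≤ 1 / 8) (hy : ‖y‖ = 1)
    (hey : 2 * δ < dist y (e (-1))) : cutMap e δ y = y := by
  have hz : ‖e.symm y‖ = 1 := by rw [e.symm.norm_map, hy]
  rw [cutMap, (cutArg_eventuallyEq_arg
    (one_lt_abs_im_or_one_lt_re_inv_smul e hδ hδ' hy hey)).eq_of_nhds, Complex.real_smul,
    Complex.arg_real_mul _ (inv_pos.2 hδ)]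
  have hpolar := Complex.norm_mul_exp_arg_mul_I (e.symm y)
  rw [hz, Complex.ofReal_one, one_mul] at hpolar
  rw [hpolar, e.apply_symm_apply]

lemma norm_flatten_jacobianMatrix_cutMap_le_one (hδ : 0 < δ) (hδ' : δ ≤ 1 / 8) (hy : ‖y‖ = 1)
    (hey : 2 * δ < dist y (e (-1))) : ‖flatten (jacobianMatrix (cutMap e δ) y)‖ ≤ 1 := by
  have hz := one_lt_abs_im_or_one_lt_re_inv_smul e hδ hδ' hy hey
  have hslit : δ⁻¹ • e.symm y ∈ Complex.slitPlane := by
    rw [Complex.mem_slitPlane_iff]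
    rcases hz with him | hre
    · exact .inr (abs_pos.1 (zero_lt_one.trans him))
    · exact .inl (zero_lt_one.trans hre)
  refine (norm_flatten_jacobianMatrix_cutMap_le e hδ y).trans ((div_le_one hδ).2 ?_)
  rw [(cutArg_eventuallyEq_arg hz).fderiv_eq]
  refine (norm_fderiv_arg_le hslit).trans_eq ?_
  rw [norm_smul, e.symm.norm_map, hy, mul_one, norm_inv, inv_inv, Real.norm_of_nonneg hδ.le]

end CutMap

section CutPoints

lemma exists_circle_im_eq {t : ℝ} (ht₀ : 0 ≤ t) (ht : t ≤ 1 / 2) :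
    ∃ a : Circle, (a : ℂ).im = t ∧ 1 / 2 ≤ (a : ℂ).re := by
  have hsq : √(1 - t ^ 2) ^ 2 = 1 - t ^ 2 := Real.sq_sqrt (by nlinarith)
  refine ⟨⟨⟨√(1 - t ^ 2), t⟩, mem_sphere_zero_iff_norm.2 ?_⟩, rfl, ?_⟩
  · rw [← sq_eq_sq₀ (norm_nonneg _) zero_le_one, Complex.sq_norm, Complex.normSq_mk, ← sq, ← sq,
      hsq]
    ring
  · exact Real.le_sqrt_of_sq_le (by nlinarith)

/- Up to `f`, the points `e j (-1)` are `m` points in the left half of the unit circle whose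
imaginary parts are spaced by `1 / (2 * m)`. -/
lemma exists_pairwise_disjoint_closedBall (f : ℂ ≃ₗᵢ[ℝ] R2) (m : ℕ) :
    ∃ e : Fin m → ℂ ≃ₗᵢ[ℝ] R2,
      (Pairwise fun i j ↦ Disjoint (closedBall (e i (-1)) (1 / (8 * m)))
        (closedBall (e j (-1)) (1 / (8 * m)))) ∧
      ∀ j, closedBall (e j (-1)) (1 / (8 * m)) ⊆ {y | (f.symm y).re < 0} := by
  have hm : Fin m → (1 : ℝ) ≤ m := fun j ↦ mod_cast j.pos
  have hpoint : ∀ j : Fin m, ∃ a : Circle, (a : ℂ).im = j / (2 * m) ∧ 1 / 2 ≤ (a : ℂ).re :=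
    fun j ↦ exists_circle_im_eq (by positivity) <| by
      have hm₀ : (0 : ℝ) < m := zero_lt_one.trans_le (hm j)
      rw [div_le_div_iff₀ (by positivity) two_pos]
      linarith [show (j : ℝ) ≤ m from mod_cast j.2.le]
  choose a ha_im ha_re using hpoint
  set e : Fin m → ℂ ≃ₗᵢ[ℝ] R2 := fun j ↦ (rotation (a j)).trans f
  have he : ∀ {j y}, y ∈ closedBall (e j (-1)) (1 / (8 * m)) →
      ‖f.symm y + a j‖ ≤ 1 / (8 * m) := fun {j y} hy ↦ by
    rw [mem_closedBall, ← f.symm.dist_map, dist_eq_norm] at hy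
    simpa [e] using hy
  refine ⟨e, fun i j hij ↦ Set.disjoint_left.2 fun y hyi hyj ↦ ?_, fun j y hy ↦ ?_⟩
  · have hm₀ : (0 : ℝ) < m := zero_lt_one.trans_le (hm i)
    have him : |((a i : ℂ) - a j).im| ≤ 1 / (8 * m) + 1 / (8 * m) :=
      (Complex.abs_im_le_norm _).trans <| by
        simpa using norm_sub_le_of_le (he hyi) (he hyj)
    have hone : (1 : ℝ) ≤ |(i : ℝ) - j| := by
      exact_mod_cast Int.one_le_abs (sub_ne_zero.2 (Nat.cast_injective.ne (Fin.val_ne_of_ne hij)))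
    rw [Complex.sub_im, ha_im, ha_im, ← sub_div, abs_div,
      abs_of_pos (by positivity : 0 < 2 * (m : ℝ)), ← add_div,
      div_le_div_iff₀ (by positivity) (by positivity)] at him
    nlinarith
  · have hre : (f.symm y + a j).re ≤ 1 / 8 := (Complex.re_le_norm _).trans <| (he hy).trans <|
      one_div_le_one_div_of_le (by norm_num) (by linarith [hm j])
    rw [Complex.add_re] at hre
    exact show (f.symm y).re < 0 by linarith [ha_re j]

lemma exists_mul_measure_closedBall_le (κ : Measure R2) (f : ℂ ≃ₗᵢ[ℝ] R2) {m : ℕ} (hm : 0 < m) :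
    ∃ e : ℂ ≃ₗᵢ[ℝ] R2,
      m * κ (closedBall (e (-1)) (1 / (8 * m))) ≤ κ {y | (f.symm y).re < 0} := by
  obtain ⟨e, he_disj, he_half⟩ := exists_pairwise_disjoint_closedBall f m
  set B : Fin m → Set R2 := fun j ↦ closedBall (e j (-1)) (1 / (8 * m))
  have : Nonempty (Fin m) := ⟨⟨0, hm⟩⟩
  obtain ⟨j, hj⟩ := Finite.exists_min fun j ↦ κ (B j)
  refine ⟨e j, ?_⟩
  calc m * κ (B j) = ∑ _i : Fin m, κ (B j) := by simp
    _ ≤ ∑ i, κ (B i) := Finset.sum_le_sum fun i _ ↦ hj i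
    _ = κ (⋃ j, B j) := by
        rw [measure_iUnion he_disj fun j ↦ measurableSet_closedBall, tsum_fintype]
    _ ≤ κ {y | (f.symm y).re < 0} := measure_mono (iUnion_subset he_half)

end CutPoints

section RelaxedArea

variable {A : Set R2} {u v : R2 → R2} {a : ℝ≥0∞} {ε : ℝ}

lemma exists_classicalArea_lt_of_relaxedArea_lt (h : relaxedArea u A < a) (hε : 0 < ε) :
    ∃ v, ContDiffOn ℝ 1 v A ∧ IntegrableOn (fun x ↦ v x - u x) A ∧
      ∫ x in A, ‖v x - u x‖ < ε ∧ classicalArea A v < a := by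
  obtain ⟨_, ⟨v, hv, hvu, hlim, rfl⟩, hlt⟩ := sInf_lt_iff.1 h
  obtain ⟨k, hka, hkε⟩ :=
    ((frequently_lt_of_liminf_lt (by isBoundedDefault) hlt).and_eventually
      (hlim.eventually_lt_const hε)).exists
  exact ⟨v k, hv k, hvu k, hkε, hka⟩

lemma relaxedArea_le_of_forall_exists
    (h : ∀ ε : ℝ, 0 < ε → ∃ v, ContDiffOn ℝ 1 v A ∧ IntegrableOn (fun x ↦ v x - u x) A ∧
      ∫ x in A, ‖v x - u x‖ < ε ∧ classicalArea A v ≤ a + ENNReal.ofReal ε) :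
    relaxedArea u A ≤ a := by
  choose v hv hvu hlt harea using fun k : ℕ ↦ h (1 / ((k : ℝ) + 1)) (by positivity)
  have hinv : Tendsto (fun k : ℕ ↦ 1 / ((k : ℝ) + 1)) atTop (𝓝 0) :=
    tendsto_one_div_add_atTop_nhds_zero_nat
  refine le_trans (sInf_le ⟨v, hv, hvu, ?_, rfl⟩) ?_
  · exact squeeze_zero (fun k ↦ integral_nonneg fun x ↦ norm_nonneg _) (fun k ↦ (hlt k).le) hinv
  · have hsum : Tendsto (fun k : ℕ ↦ a + ENNReal.ofReal (1 / ((k : ℝ) + 1))) atTop (𝓝 a) := by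
      simpa using (ENNReal.tendsto_ofReal hinv).const_add a
    exact (liminf_le_liminf (.of_forall harea)).trans_eq hsum.liminf_eq

lemma relaxedArea_le_of_tendsto {w : ℕ → R2 → R2}
    (hwu : ∀ m, IntegrableOn (fun x ↦ w m x - u x) A)
    (hlim : Tendsto (fun m ↦ ∫ x in A, ‖w m x - u x‖) atTop (𝓝 0))
    (h : ∀ᶠ m in atTop, relaxedArea (w m) A ≤ a) : relaxedArea u A ≤ a := by
  by_cases ha : a = ∞
  · exact ha ▸ le_top
  refine relaxedArea_le_of_forall_exists fun ε hε ↦ ?_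
  obtain ⟨m, hm, hma⟩ := ((hlim.eventually_lt_const (half_pos hε)).and h).exists
  have hlt : relaxedArea (w m) A < a + ENNReal.ofReal ε :=
    hma.trans_lt (ENNReal.lt_add_right ha (ENNReal.ofReal_pos.2 hε).ne')
  obtain ⟨v, hv, hvw, hvε, harea⟩ := exists_classicalArea_lt_of_relaxedArea_lt hlt (half_pos hε)
  have hvu : IntegrableOn (fun x ↦ v x - u x) A :=
    (hvw.add (hwu m)).congr (.of_forall fun x ↦ sub_add_sub_cancel _ _ _)
  refine ⟨v, hv, hvu, ?_, harea.le⟩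
  calc ∫ x in A, ‖v x - u x‖ ≤ ∫ x in A, (‖v x - w m x‖ + ‖w m x - u x‖) :=
        integral_mono hvu.norm (hvw.norm.add (hwu m).norm) fun x ↦
          norm_sub_le_norm_sub_add_norm_sub _ _ _
    _ = (∫ x in A, ‖v x - w m x‖) + ∫ x in A, ‖w m x - u x‖ :=
        integral_add hvw.norm (hwu m).norm
    _ < ε := by linarith

lemma jacobianMatrix_comp {Φ w : R2 → R2} {x : R2} (hΦ : DifferentiableAt ℝ Φ (w x))
    (hw : DifferentiableAt ℝ w x) :
    jacobianMatrix (fun x ↦ Φ (w x)) x = jacobianMatrix Φ (w x) * jacobianMatrix w x := by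
  ext i j
  set y : R2 := fderiv ℝ w x (EuclideanSpace.single j 1)
  have hy : y = ∑ k, y k • EuclideanSpace.single k (1 : ℝ) := by
    ext k
    fin_cases k <;> simp
  have hchain : fderiv ℝ (fun x ↦ Φ (w x)) x (EuclideanSpace.single j 1) = fderiv ℝ Φ (w x) y := by
    rw [fderiv_fun_comp x hΦ hw, ContinuousLinearMap.comp_apply]
  rw [jacobianMatrix, Matrix.of_apply, hchain, hy, map_sum, Matrix.mul_apply]
  simp [jacobianMatrix, y, mul_comm]

lemma classicalArea_eq_lintegral_graphNorm (hA : MeasurableSet A)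
    (h : ∀ x ∈ A, (jacobianMatrix v x).det = 0) :
    classicalArea A v = ∫⁻ x in A, ENNReal.ofReal (graphNorm (flatten (jacobianMatrix v x))) := by
  refine setLIntegral_congr_fun hA fun x hx ↦ ?_
  simp only [h x hx, graphNorm_flatten, ne_eq, OfNat.ofNat_ne_zero, not_false_eq_true, zero_pow,
    add_zero]

end RelaxedArea

section Composition

variable {Ω A : Set R2} {u Φ : R2 → R2} {G : R2 → Matrix (Fin 2) (Fin 2) ℝ} {K r : ℝ}

lemma tendsto_integral_norm_comp_mollify_sub {C : ℝ} (hA : A ⊆ Ω) (hAvol : volume A ≠ ∞)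
    (hΩ : MeasurableSet Ω) (hu : IntegrableOn u Ω) (hΦ : Continuous Φ) (hΦ_bdd : ∀ y, ‖Φ y‖ ≤ C) :
    Tendsto (fun k ↦ ∫ x in A,
      ‖Φ (mollify (shrinkingBump R2 k) volume (Ω.indicator u) x) - Φ (u x)‖) atTop (𝓝 0) := by
  have hloc : LocallyIntegrable (Ω.indicator u) :=
    (hu.integrable_indicator hΩ).locallyIntegrable
  have hw : ∀ k, Continuous (mollify (shrinkingBump R2 k) volume (Ω.indicator u)) := fun k ↦
    (contDiff_mollify (n := 0) hloc).continuous
  have hΦu : AEStronglyMeasurable (fun x ↦ Φ (u x)) (volume.restrict A) :=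
    hΦ.comp_aestronglyMeasurable (hu.mono_set hA).aestronglyMeasurable
  rw [← integral_zero R2 ℝ (μ := volume.restrict A)]
  refine tendsto_integral_of_dominated_convergence (fun _ ↦ C + C)
    (fun k ↦ ((hΦ.comp (hw k)).aestronglyMeasurable.sub hΦu).norm) (integrableOn_const hAvol)
    (fun k ↦ .of_forall fun x ↦ ?_) ?_
  · rw [norm_norm]
    exact norm_sub_le_of_le (hΦ_bdd _) (hΦ_bdd _)
  · filter_upwards [ae_restrict_of_ae (ae_tendsto_mollify hloc),
      ae_restrict_of_ae_restrict_of_subset hA (ae_restrict_mem hΩ)] with x hx hxΩ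
    rw [indicator_of_mem hxΩ] at hx
    simpa using (((hΦ.tendsto _).comp hx).sub_const (Φ (u x))).norm

lemma ofReal_graphNorm_mul_jacobianMatrix_mollify_le {φ : ContDiffBump (0 : R2)} {x : R2}
    {M : Matrix (Fin 2) (Fin 2) ℝ} (hΩ : MeasurableSet Ω) (hu : MemW11 Ω u G)
    (hx : closedBall x φ.rOut ⊆ Ω) (hK : 1 ≤ K) (hM : ‖flatten M‖ ≤ K) :
    ENNReal.ofReal (graphNorm (flatten
      (M * jacobianMatrix (mollify φ volume (Ω.indicator u)) x))) ≤
      ENNReal.ofReal K *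
        ‖mollify φ volume (Ω.indicator fun t ↦ graphNorm (flatten (G t))) x‖ₑ := by
  set J := jacobianMatrix (mollify φ volume (Ω.indicator u)) x
  set g : R2 → ℝ := Ω.indicator fun t ↦ graphNorm (flatten (G t))
  have hG : IntegrableOn (fun t ↦ flatten (G t)) Ω := integrableOn_flatten hu.2.1
  have hJ : graphNorm (flatten J) ≤ mollify φ volume g x := by
    rw [flatten_jacobianMatrix_mollify hΩ hu hx]
    exact graphNorm_mollify_le hΩ (hG.integrable_indicator hΩ).locallyIntegrable hx
  calc ENNReal.ofReal (graphNorm (flatten (M * J)))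
      ≤ ENNReal.ofReal K * ENNReal.ofReal (graphNorm (flatten J)) :=
        ofReal_graphNorm_flatten_mul_le hK hM J
    _ ≤ ENNReal.ofReal K * ‖mollify φ volume g x‖ₑ := by
        gcongr
        exact (ENNReal.ofReal_le_ofReal hJ).trans (Real.ofReal_le_enorm _)

lemma ae_tendsto_jacobianMatrix_comp_mollify (hΩ : IsOpen Ω) (hu : MemW11 Ω u G)
    (hΦ : ContDiff ℝ 1 Φ) :
    ∀ᵐ x ∂volume.restrict Ω, Tendsto (fun k ↦ jacobianMatrix
      (fun x ↦ Φ (mollify (shrinkingBump R2 k) volume (Ω.indicator u) x)) x) atTop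
        (𝓝 (jacobianMatrix Φ (u x) * G x)) := by
  have hloc : LocallyIntegrable (Ω.indicator u) :=
    (hu.1.integrable_indicator hΩ.measurableSet).locallyIntegrable
  have hGloc : LocallyIntegrable (Ω.indicator fun t ↦ flatten (G t)) :=
    ((integrableOn_flatten hu.2.1).integrable_indicator hΩ.measurableSet).locallyIntegrable
  filter_upwards [ae_restrict_of_ae (ae_tendsto_mollify hloc),
    ae_restrict_of_ae (ae_tendsto_mollify hGloc), ae_restrict_mem hΩ.measurableSet]
    with x hux hGx hxΩ
  rw [indicator_of_mem hxΩ] at hux hGx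
  have hJ : Tendsto (fun k ↦ jacobianMatrix
      (mollify (shrinkingBump R2 k) volume (Ω.indicator u)) x) atTop (𝓝 (G x)) := by
    refine tendsto_of_tendsto_flatten (hGx.congr' ?_)
    filter_upwards [eventually_mem_innerParallelSet hΩ (tendsto_rOut_shrinkingBump R2) hxΩ]
      with k hk
    exact (flatten_jacobianMatrix_mollify hΩ.measurableSet hu
      (closedBall_subset_of_mem_innerParallelSet hk)).symm
  refine ((((continuous_jacobianMatrix hΦ).tendsto _).comp hux).mul hJ).congr fun k ↦ ?_
  exact (jacobianMatrix_comp (hΦ.differentiable one_ne_zero _)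
    ((contDiff_mollify (n := 1) hloc).differentiable one_ne_zero x)).symm

lemma limsup_lintegral_graphNorm_comp_mollify_le (hΩ : IsOpen Ω) (hΩvol : volume Ω ≠ ∞)
    (hu : MemW11 Ω u G) (hA : MeasurableSet A) (hAΩ : A ⊆ Ω)
    (hΦ : ContDiff ℝ 1 Φ) (hK : 1 ≤ K) (hΦK : ∀ y, ‖flatten (jacobianMatrix Φ y)‖ ≤ K) :
    limsup (fun k ↦ ∫⁻ x in A ∩ innerParallelSet Ω (shrinkingBump R2 k).rOut,
      ENNReal.ofReal (graphNorm (flatten (jacobianMatrix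
        (fun x ↦ Φ (mollify (shrinkingBump R2 k) volume (Ω.indicator u) x)) x)))) atTop ≤
      ∫⁻ x in A, ENNReal.ofReal (graphNorm (flatten (jacobianMatrix Φ (u x) * G x))) := by
  have hloc : LocallyIntegrable (Ω.indicator u) :=
    (hu.1.integrable_indicator hΩ.measurableSet).locallyIntegrable
  set w : ℕ → R2 → R2 := fun k ↦ mollify (shrinkingBump R2 k) volume (Ω.indicator u)
  have hw : ∀ k, ContDiff ℝ 1 (w k) := fun k ↦ contDiff_mollify (n := 1) hloc
  set g : R2 → ℝ := Ω.indicator fun t ↦ graphNorm (flatten (G t))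
  have hg : Integrable g := (integrableOn_graphNorm (integrableOn_flatten hu.2.1)
    hΩvol).integrable_indicator hΩ.measurableSet
  have hmollify : ∀ k, Continuous (mollify (shrinkingBump R2 k) volume g) := fun k ↦
    (contDiff_mollify (n := 0) hg.locallyIntegrable).continuous
  set F : Matrix (Fin 2) (Fin 2) ℝ → ℝ≥0∞ := fun M ↦ ENNReal.ofReal (graphNorm (flatten M))
  have hF : Continuous F :=
    ENNReal.continuous_ofReal.comp (continuous_graphNorm.comp continuous_flatten)
  set B : ℕ → Set R2 := fun k ↦ A ∩ innerParallelSet Ω (shrinkingBump R2 k).rOut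
  have hB : ∀ k, MeasurableSet (B k) := fun k ↦ hA.inter isOpen_innerParallelSet.measurableSet
  calc limsup (fun k ↦ ∫⁻ x in B k, F (jacobianMatrix (fun x ↦ Φ (w k x)) x)) atTop
      = limsup (fun k ↦ ∫⁻ x, (B k).indicator
          (fun x ↦ F (jacobianMatrix (fun x ↦ Φ (w k x)) x)) x) atTop := by
        simp only [lintegral_indicator (hB _)]
    _ ≤ ∫⁻ x, A.indicator (fun x ↦ F (jacobianMatrix Φ (u x) * G x)) x := ?_
    _ = ∫⁻ x in A, F (jacobianMatrix Φ (u x) * G x) := lintegral_indicator hA _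
  refine limsup_lintegral_le_of_tendsto_of_le
    (b := fun k x ↦ ENNReal.ofReal K * ‖mollify (shrinkingBump R2 k) volume g x‖ₑ)
    (β := fun x ↦ ENNReal.ofReal K * ‖g x‖ₑ)
    (fun k ↦ ((hF.comp (continuous_jacobianMatrix (hΦ.comp (hw k)))).measurable.indicator
      (hB k)).aemeasurable)
    (fun k ↦ ((hmollify k).enorm.measurable.const_mul _).aemeasurable)
    (fun k ↦ .of_forall (indicator_le fun x hx ↦ ?_)) ?_ ?_
    (hg.aestronglyMeasurable.enorm.const_mul _) ?_ fun k ↦ ?_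
  · rw [jacobianMatrix_comp (hΦ.differentiable one_ne_zero _)
      ((hw k).differentiable one_ne_zero x)]
    exact ofReal_graphNorm_mul_jacobianMatrix_mollify_le hΩ.measurableSet hu
      (closedBall_subset_of_mem_innerParallelSet hx.2) hK (hΦK _)
  · filter_upwards [(ae_restrict_iff' hΩ.measurableSet).1
      (ae_tendsto_jacobianMatrix_comp_mollify hΩ hu hΦ)] with x hx
    exact tendsto_indicator_inter_innerParallelSet hΩ (tendsto_rOut_shrinkingBump R2) hAΩ
      fun hxΩ ↦ (hF.tendsto _).comp (hx hxΩ)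
  · filter_upwards [ae_tendsto_mollify hg.locallyIntegrable] with x hx
    exact ENNReal.Tendsto.const_mul hx.enorm (.inr ENNReal.ofReal_ne_top)
  · rw [lintegral_const_mul'' _ hg.aestronglyMeasurable.enorm]
    exact ENNReal.mul_ne_top ENNReal.ofReal_ne_top hg.2.ne
  · rw [lintegral_const_mul'' _ hg.aestronglyMeasurable.enorm,
      lintegral_const_mul _ (hmollify k).enorm.measurable]
    gcongr ENNReal.ofReal K * ?_
    exact lintegral_enorm_mollify_le hg.aestronglyMeasurable

lemma relaxedArea_comp_le {C : ℝ} (hΩ : IsOpen Ω) (hΩvol : volume Ω ≠ ∞)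
    (hu : MemW11 Ω u G) (hr : 0 < r) (hA : MeasurableSet A) (hAΩ : A ⊆ innerParallelSet Ω r)
    (hΦ : ContDiff ℝ 1 Φ) (hΦ_bdd : ∀ y, ‖Φ y‖ ≤ C) (hdet : ∀ y, (jacobianMatrix Φ y).det = 0)
    (hK : 1 ≤ K) (hΦK : ∀ y, ‖flatten (jacobianMatrix Φ y)‖ ≤ K) :
    relaxedArea (fun x ↦ Φ (u x)) A ≤
      ∫⁻ x in A, ENNReal.ofReal (graphNorm (flatten (jacobianMatrix Φ (u x) * G x))) := by
  have hA' : A ⊆ Ω := hAΩ.trans innerParallelSet_subset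
  have hAvol : volume A ≠ ∞ := measure_ne_top_of_subset hA' hΩvol
  have hloc : LocallyIntegrable (Ω.indicator u) :=
    (hu.1.integrable_indicator hΩ.measurableSet).locallyIntegrable
  set w : ℕ → R2 → R2 := fun k ↦ mollify (shrinkingBump R2 k) volume (Ω.indicator u)
  have hw : ∀ k, ContDiff ℝ 1 (w k) := fun k ↦ contDiff_mollify (n := 1) hloc
  have hint : ∀ {v : R2 → R2}, AEStronglyMeasurable v (volume.restrict A) →
      IntegrableOn (fun x ↦ Φ (v x)) A := fun hv ↦
    (integrableOn_const (C := C) hAvol).mono' (hΦ.continuous.comp_aestronglyMeasurable hv)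
      (.of_forall fun _ ↦ hΦ_bdd _)
  have harea : ∀ᶠ k in atTop, classicalArea A (fun x ↦ Φ (w k x)) ≤
      ∫⁻ x in A ∩ innerParallelSet Ω (shrinkingBump R2 k).rOut,
        ENNReal.ofReal (graphNorm (flatten (jacobianMatrix (fun x ↦ Φ (w k x)) x))) := by
    filter_upwards [(tendsto_rOut_shrinkingBump R2).eventually_lt_const hr] with k hk
    rw [inter_eq_left.2 (hAΩ.trans (innerParallelSet_mono subset_rfl hk.le)),
      classicalArea_eq_lintegral_graphNorm hA fun x _ ↦ ?_]
    rw [jacobianMatrix_comp (hΦ.differentiable one_ne_zero _)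
      ((hw k).differentiable one_ne_zero x), Matrix.det_mul, hdet, zero_mul]
  calc relaxedArea (fun x ↦ Φ (u x)) A
      ≤ liminf (fun k ↦ classicalArea A fun x ↦ Φ (w k x)) atTop :=
        sInf_le ⟨_, fun k ↦ (hΦ.comp (hw k)).contDiffOn, fun k ↦
          (hint (hw k).continuous.aestronglyMeasurable).sub
            (hint (hu.1.mono_set hA').aestronglyMeasurable),
          tendsto_integral_norm_comp_mollify_sub hA' hAvol hΩ.measurableSet hu.1 hΦ.continuous
            hΦ_bdd, rfl⟩
    _ ≤ limsup (fun k ↦ classicalArea A fun x ↦ Φ (w k x)) atTop := liminf_le_limsup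
    _ ≤ _ := limsup_le_limsup harea
    _ ≤ _ := limsup_lintegral_graphNorm_comp_mollify_le hΩ hΩvol hu hA hA' hΦ hK hΦK

end Composition

section AreaMeasure

variable {A B : Set R2} {G : R2 → Matrix (Fin 2) (Fin 2) ℝ} {u : R2 → R2}

/-- The measure `B ↦ ∫_{A ∩ B} √(1 + |G|²)`. -/
def areaMeasure (A : Set R2) (G : R2 → Matrix (Fin 2) (Fin 2) ℝ) : Measure R2 :=
  (volume.restrict A).withDensity fun x ↦ ENNReal.ofReal (graphNorm (flatten (G x)))

lemma areaMeasure_absolutelyContinuous : areaMeasure A G ≪ volume.restrict A :=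
  withDensity_absolutelyContinuous _ _

lemma restrict_le_areaMeasure : volume.restrict A ≤ areaMeasure A G := by
  conv_lhs => rw [← withDensity_one (μ := volume.restrict A)]
  exact withDensity_mono (.of_forall fun x ↦ ENNReal.one_le_ofReal.2 (one_le_graphNorm _))

lemma areaMeasure_univ :
    areaMeasure A G univ = ∫⁻ x in A, ENNReal.ofReal (graphNorm (flatten (G x))) := by
  rw [areaMeasure, withDensity_apply _ .univ, Measure.restrict_univ]

lemma restrict_areaMeasure (hB : MeasurableSet B) :
    (areaMeasure A G).restrict B = areaMeasure (B ∩ A) G := by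
  rw [areaMeasure, restrict_withDensity hB, Measure.restrict_restrict hB, areaMeasure]

lemma areaMeasure_univ_ne_top (hG : ∀ i j, IntegrableOn (G · i j) A) (hA : volume A ≠ ∞) :
    areaMeasure A G univ ≠ ∞ := by
  rw [areaMeasure_univ]
  exact (integrableOn_graphNorm (integrableOn_flatten hG) hA).lintegral_lt_top.ne

lemma isLocallyFiniteMeasure_areaMeasure (hG : ∀ i j, IntegrableOn (G · i j) A) :
    IsLocallyFiniteMeasure (areaMeasure A G) := by
  refine ⟨fun x ↦ ⟨ball x 1, ball_mem_nhds x one_pos, ?_⟩⟩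
  rw [← Measure.restrict_apply_univ, restrict_areaMeasure measurableSet_ball]
  exact (areaMeasure_univ_ne_top (fun i j ↦ (hG i j).mono_set inter_subset_right)
    (measure_ne_top_of_subset inter_subset_left measure_ball_lt_top.ne)).lt_top

lemma lintegral_map_areaMeasure (hG : ∀ i j, IntegrableOn (G · i j) A)
    (hu : AEMeasurable u (volume.restrict A)) {c : R2 → ℝ≥0∞} (hc : Measurable c) :
    ∫⁻ y, c y ∂(areaMeasure A G).map u =
      ∫⁻ x in A, ENNReal.ofReal (graphNorm (flatten (G x))) * c (u x) := by
  rw [lintegral_map' hc.aemeasurable (hu.mono_ac areaMeasure_absolutelyContinuous)]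
  exact lintegral_withDensity_eq_lintegral_mul₀
    (aemeasurable_graphNorm (integrableOn_flatten hG).aestronglyMeasurable)
    (hc.comp_aemeasurable hu)

end AreaMeasure

section LocalUpperBound

variable {Ω A : Set R2} {u : R2 → R2} {G : R2 → Matrix (Fin 2) (Fin 2) ℝ} {r C δ : ℝ}
  (e : ℂ ≃ₗᵢ[ℝ] R2)

lemma relaxedArea_cutMap_comp_le (hC : ∀ z, ‖fderiv ℝ cutArg z‖ ≤ C) (hΩ : IsOpen Ω)
    (hΩvol : volume Ω ≠ ∞) (hu : MemW11 Ω u G) (hS : SphereValued A u) (hr : 0 < r)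
    (hA : MeasurableSet A) (hAΩ : A ⊆ innerParallelSet Ω r) (hδ : 0 < δ) (hδ' : δ ≤ 1 / 8) :
    relaxedArea (fun x ↦ cutMap e δ (u x)) A ≤ (areaMeasure A G).map u univ +
      ENNReal.ofReal (1 + C / δ) * (areaMeasure A G).map u (closedBall (e (-1)) (2 * δ)) := by
  set B : Set R2 := closedBall (e (-1)) (2 * δ)
  set J : R2 → Matrix (Fin 2) (Fin 2) ℝ := jacobianMatrix (cutMap e δ)
  set c : R2 → ℝ≥0∞ := fun y ↦ 1 + B.indicator (fun _ ↦ ENNReal.ofReal (1 + C / δ)) y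
  have huA : MemW11 A u G := memW11_mono (hAΩ.trans innerParallelSet_subset) hu
  have hK : 1 ≤ 1 + C / δ := le_add_of_nonneg_right
    (div_nonneg ((norm_nonneg _).trans (hC 0)) hδ.le)
  have hJ : ∀ y, ‖flatten (J y)‖ ≤ 1 + C / δ := fun y ↦ by
    refine (norm_flatten_jacobianMatrix_cutMap_le e hδ y).trans (le_add_of_nonneg_of_le ?_ ?_)
    · exact zero_le_one
    · gcongr
      exact hC _
  calc relaxedArea (fun x ↦ cutMap e δ (u x)) A
      ≤ ∫⁻ x in A, ENNReal.ofReal (graphNorm (flatten (J (u x) * G x))) :=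
        relaxedArea_comp_le hΩ hΩvol hu hr hA hAΩ (contDiff_cutMap e δ)
          (fun y ↦ (norm_cutMap e δ y).le) (det_jacobianMatrix_cutMap e δ) hK hJ
    _ ≤ ∫⁻ x in A, ENNReal.ofReal (graphNorm (flatten (G x))) * c (u x) := by
        refine lintegral_mono_ae (hS.mono fun x hx ↦ ?_)
        rw [mul_comm]
        by_cases hxB : u x ∈ B
        · simp only [c, indicator_of_mem hxB]
          exact (ofReal_graphNorm_flatten_mul_le hK (hJ _) _).trans (by gcongr; exact le_add_self)
        · simp only [c, indicator_of_notMem hxB, add_zero]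
          simpa only [ENNReal.ofReal_one] using ofReal_graphNorm_flatten_mul_le le_rfl
            (norm_flatten_jacobianMatrix_cutMap_le_one e hδ hδ' hx (not_le.1 hxB)) (G x)
    _ = ∫⁻ y, c y ∂(areaMeasure A G).map u :=
        (lintegral_map_areaMeasure huA.2.1 huA.1.aemeasurable
          (measurable_const.add (measurable_const.indicator measurableSet_closedBall))).symm
    _ = _ := by
        rw [lintegral_add_left measurable_const, lintegral_one,
          lintegral_indicator_const measurableSet_closedBall]

lemma lintegral_enorm_cutMap_comp_sub_le (hu : AEMeasurable u (volume.restrict A))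
    (hS : SphereValued A u) (hδ : 0 < δ) (hδ' : δ ≤ 1 / 8) :
    ∫⁻ x in A, ‖cutMap e δ (u x) - u x‖ₑ ≤
      2 * (areaMeasure A G).map u (closedBall (e (-1)) (2 * δ)) := by
  set B : Set R2 := closedBall (e (-1)) (2 * δ)
  have hu' : AEMeasurable u (areaMeasure A G) := hu.mono_ac areaMeasure_absolutelyContinuous
  calc ∫⁻ x in A, ‖cutMap e δ (u x) - u x‖ₑ
      ≤ ∫⁻ x in A, B.indicator (fun _ ↦ 2) (u x) := by
        refine lintegral_mono_ae (hS.mono fun x hx ↦ ?_)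
        by_cases hxB : u x ∈ B
        · rw [indicator_of_mem hxB]
          refine enorm_sub_le.trans_eq ?_
          rw [← ofReal_norm, ← ofReal_norm, norm_cutMap, hx, ENNReal.ofReal_one, one_add_one_eq_two]
        · rw [cutMap_eq_self e hδ hδ' hx (not_le.1 hxB), sub_self, enorm_zero]
          exact zero_le
    _ ≤ ∫⁻ x, B.indicator (fun _ ↦ 2) (u x) ∂areaMeasure A G :=
        lintegral_mono' restrict_le_areaMeasure le_rfl
    _ = ∫⁻ y, B.indicator (fun _ ↦ 2) y ∂(areaMeasure A G).map u :=
        (lintegral_map' (measurable_const.indicator measurableSet_closedBall).aemeasurable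
          hu').symm
    _ = 2 * (areaMeasure A G).map u B := lintegral_indicator_const measurableSet_closedBall _

/- Among `m` disjoint disks of radius `1 / (8 * m)` around points of the left half circle, one is
visited by `u` on at most the fraction `1 / m` of the area carried by the left half circle. This
compensates for the Lipschitz constant, of order `m`, of the cut in that disk. -/
lemma exists_relaxedArea_le_areaMeasure_add (hC : ∀ z, ‖fderiv ℝ cutArg z‖ ≤ C) (hΩ : IsOpen Ω)
    (hΩvol : volume Ω ≠ ∞) (hu : MemW11 Ω u G) (hS : SphereValued A u) (hr : 0 < r)
    (hA : MeasurableSet A) (hAΩ : A ⊆ innerParallelSet Ω r) (f : ℂ ≃ₗᵢ[ℝ] R2) {m : ℕ}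
    (hm : 0 < m) :
    ∃ w : R2 → R2, AEStronglyMeasurable w (volume.restrict A) ∧
      ∫⁻ x in A, ‖w x - u x‖ₑ ≤ 2 * ((areaMeasure A G).map u univ * (m : ℝ≥0∞)⁻¹) ∧
      relaxedArea w A ≤ (areaMeasure A G).map u univ +
        ENNReal.ofReal (1 + 16 * C) * (areaMeasure A G).map u {y | (f.symm y).re < 0} := by
  set κ := (areaMeasure A G).map u
  obtain ⟨e, he⟩ := exists_mul_measure_closedBall_le κ f hm
  have hm₁ : (1 : ℝ) ≤ m := mod_cast hm
  have hC₀ : 0 ≤ C := (norm_nonneg _).trans (hC 0)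
  set δ : ℝ := 1 / (16 * m)
  have hδ : 0 < δ := by positivity
  have hδ' : δ ≤ 1 / 8 := one_div_le_one_div_of_le (by norm_num) (by linarith)
  rw [show 1 / (8 * m) = 2 * δ by simp only [δ]; field_simp; norm_num] at he
  have huA : IntegrableOn u A := hu.1.mono_set (hAΩ.trans innerParallelSet_subset)
  refine ⟨fun x ↦ cutMap e δ (u x),
    (contDiff_cutMap e δ).continuous.comp_aestronglyMeasurable huA.aestronglyMeasurable, ?_, ?_⟩
  · refine (lintegral_enorm_cutMap_comp_sub_le (G := G) e huA.aemeasurable hS hδ hδ').trans ?_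
    gcongr
    rw [← div_eq_mul_inv, ENNReal.le_div_iff_mul_le (.inl (mod_cast hm.ne'))
      (.inl (ENNReal.natCast_ne_top m)), mul_comm]
    exact he.trans (measure_mono (subset_univ _))
  · refine (relaxedArea_cutMap_comp_le e hC hΩ hΩvol hu hS hr hA hAΩ hδ hδ').trans ?_
    gcongr κ univ + ?_
    have hCδ : 1 + C / δ ≤ (1 + 16 * C) * m := by
      rw [show C / δ = 16 * C * m by simp only [δ]; field_simp]
      linarith
    calc ENNReal.ofReal (1 + C / δ) * κ (closedBall (e (-1)) (2 * δ))
        ≤ ENNReal.ofReal ((1 + 16 * C) * m) * κ (closedBall (e (-1)) (2 * δ)) := by gcongr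
      _ = ENNReal.ofReal (1 + 16 * C) * (m * κ (closedBall (e (-1)) (2 * δ))) := by
        rw [ENNReal.ofReal_mul (by positivity), ENNReal.ofReal_natCast, mul_assoc]
      _ ≤ ENNReal.ofReal (1 + 16 * C) * κ {y | (f.symm y).re < 0} := by gcongr

lemma relaxedArea_le_areaMeasure_add (hC : ∀ z, ‖fderiv ℝ cutArg z‖ ≤ C) (hΩ : IsOpen Ω)
    (hΩvol : volume Ω ≠ ∞) (hu : MemW11 Ω u G) (hS : SphereValued A u) (hr : 0 < r)
    (hA : MeasurableSet A) (hAΩ : A ⊆ innerParallelSet Ω r) (f : ℂ ≃ₗᵢ[ℝ] R2) :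
    relaxedArea u A ≤ (areaMeasure A G).map u univ +
      ENNReal.ofReal (1 + 16 * C) * (areaMeasure A G).map u {y | (f.symm y).re < 0} := by
  have huA : MemW11 A u G := memW11_mono (hAΩ.trans innerParallelSet_subset) hu
  have hAvol : volume A ≠ ∞ :=
    measure_ne_top_of_subset (hAΩ.trans innerParallelSet_subset) hΩvol
  have hκ : (areaMeasure A G).map u univ ≠ ∞ := by
    rw [Measure.map_apply_of_aemeasurable
      (huA.1.aemeasurable.mono_ac areaMeasure_absolutelyContinuous) .univ, preimage_univ]
    exact areaMeasure_univ_ne_top huA.2.1 hAvol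
  choose w hw hwu harea using fun k : ℕ ↦
    exists_relaxedArea_le_areaMeasure_add hC hΩ hΩvol hu hS hr hA hAΩ f k.add_one_pos
  have hlim : Tendsto (fun k ↦ ∫⁻ x in A, ‖w k x - u x‖ₑ) atTop (𝓝 0) := by
    refine tendsto_of_tendsto_of_tendsto_of_le_of_le tendsto_const_nhds ?_ (fun k ↦ zero_le) hwu
    have hinv : Tendsto (fun k : ℕ ↦ ((k + 1 : ℕ) : ℝ≥0∞)⁻¹) atTop (𝓝 0) :=
      ENNReal.tendsto_inv_nat_nhds_zero.comp (tendsto_add_atTop_nat 1)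
    simpa only [mul_zero] using ENNReal.Tendsto.const_mul
      (ENNReal.Tendsto.const_mul hinv (.inr hκ)) (.inr ENNReal.ofNat_ne_top)
  have hmeas : ∀ k, AEStronglyMeasurable (fun x ↦ w k x - u x) (volume.restrict A) := fun k ↦
    (hw k).sub huA.1.aestronglyMeasurable
  refine relaxedArea_le_of_tendsto (w := w) (fun k ↦ ⟨hmeas k, (hwu k).trans_lt ?_⟩) ?_
    (.of_forall harea)
  · exact ENNReal.mul_lt_top ENNReal.ofNat_lt_top
      (ENNReal.mul_lt_top hκ.lt_top (ENNReal.inv_lt_top.2 (mod_cast k.add_one_pos)))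
  · simp only [integral_norm_eq_lintegral_enorm (hmeas _)]
    exact (ENNReal.tendsto_toReal ENNReal.zero_ne_top).comp hlim

end LocalUpperBound

section Covering

variable {X : Type*} [TopologicalSpace X] [MeasurableSpace X] {ν : Measure X} [ν.OuterRegular]
  {N : Set X}

lemma exists_isOpen_subset_measure_le {E : Set X} {η : ℝ≥0∞} (hN : IsOpen N) (hE : ν E ≠ ∞)
    (hEN : E ⊆ N) (hη : η ≠ 0) : ∃ A, IsOpen A ∧ E ⊆ A ∧ A ⊆ N ∧ ν A ≤ ν E + η := by
  obtain ⟨A, hEA, hA, hlt⟩ := E.exists_isOpen_lt_add hE hη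
  exact ⟨A ∩ N, hA.inter hN, subset_inter hEA hEN, inter_subset_right,
    (measure_mono inter_subset_left).trans hlt.le⟩

lemma exists_isOpen_iUnion_subset_tsum_le {F : Set X → ℝ≥0∞} {N E : ℕ → Set X} {C ε : ℝ≥0∞}
    (hN : ∀ i, IsOpen (N i)) (hEN : ∀ i, E i ⊆ N i) (hEν : ∀ i, NullMeasurableSet (E i) ν)
    (hE : ∀ i, ν (E i) ≠ ∞) (hC : C ≠ ∞)
    (hF : ∀ i A, IsOpen A → A ⊆ N i → F A ≤ ν A + C * ν (A \ E i)) (hε : ε ≠ 0) :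
    ∃ A : ℕ → Set X, (∀ i, IsOpen (A i) ∧ A i ⊆ N i) ∧ ⋃ i, E i ⊆ ⋃ i, A i ∧
      ∑' i, F (A i) ≤ ν (⋃ i, E i) + ε := by
  have hC₁ : 1 + C ≠ 0 := (add_pos_of_pos_of_nonneg one_pos zero_le).ne'
  have hC₂ : 1 + C ≠ ∞ := ENNReal.add_ne_top.2 ⟨ENNReal.one_ne_top, hC⟩
  obtain ⟨η, hη, hηε⟩ :=
    ENNReal.exists_pos_sum_of_countable' (ENNReal.div_ne_zero.2 ⟨hε, hC₂⟩) ℕ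
  have hDE : ∀ i, disjointed E i ⊆ E i := disjointed_subset E
  have hDν : ∀ i, NullMeasurableSet (disjointed E i) ν := fun i ↦
    disjointedRec (fun _ _ ht ↦ ht.diff (hEν _)) (hEν i)
  have hD : ∀ i, ν (disjointed E i) ≠ ∞ := fun i ↦ measure_ne_top_of_subset (hDE i) (hE i)
  choose A hA hDA hAN hAη using fun i ↦
    exists_isOpen_subset_measure_le (hN i) (hD i) ((hDE i).trans (hEN i)) (hη i).ne'
  refine ⟨A, fun i ↦ ⟨hA i, hAN i⟩, iUnion_disjointed (f := E) ▸ iUnion_mono hDA, ?_⟩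
  have hAE : ∀ i, ν (A i \ E i) ≤ η i := fun i ↦ by
    refine (measure_mono (sdiff_subset_sdiff_right (hDE i))).trans ?_
    rw [measure_sdiff (hDA i) (hDν i) (hD i)]
    exact tsub_le_iff_left.2 (hAη i)
  calc ∑' i, F (A i) ≤ ∑' i, (ν (disjointed E i) + (1 + C) * η i) :=
        ENNReal.tsum_le_tsum fun i ↦ calc
          F (A i) ≤ ν (A i) + C * ν (A i \ E i) := hF i _ (hA i) (hAN i)
          _ ≤ ν (disjointed E i) + η i + C * η i := by gcongr; exacts [hAη i, hAE i]
          _ = ν (disjointed E i) + (1 + C) * η i := by ring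
    _ = ν (⋃ i, E i) + (1 + C) * ∑' i, η i := by
        rw [ENNReal.tsum_add, ENNReal.tsum_mul_left, ← iUnion_disjointed (f := E),
          measure_iUnion₀ (fun i j hij ↦ (disjoint_disjointed E hij).aedisjoint) hDν]
    _ ≤ ν (⋃ i, E i) + (1 + C) * (ε / (1 + C)) := by gcongr
    _ = ν (⋃ i, E i) + ε := by rw [ENNReal.mul_div_cancel hC₁ hC₂]

end Covering

section UpperBound

variable {Ω A U V : Set R2} {u : R2 → R2} {G : R2 → Matrix (Fin 2) (Fin 2) ℝ} {r C : ℝ}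

lemma exists_linearIsometryEquiv_forall_exists_re_nonneg :
    ∃ f : Bool → ℂ ≃ₗᵢ[ℝ] R2, ∀ y, ∃ b, 0 ≤ ((f b).symm y).re := by
  let e : ℂ ≃ₗᵢ[ℝ] R2 := Complex.orthonormalBasisOneI.repr
  refine ⟨fun b ↦ cond b e ((LinearIsometryEquiv.neg ℝ).trans e), fun y ↦ ?_⟩
  obtain hy | hy := le_total 0 (e.symm y).re
  · exact ⟨true, hy⟩
  · exact ⟨false, neg_nonneg.2 hy⟩

lemma exists_mem_innerParallelSet_inter_ball {X : Type*} [PseudoMetricSpace X] {U : Set X}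
    (hU : IsOpen U) {x : X} (hx : x ∈ U) (p : X) :
    ∃ n : ℕ, x ∈ innerParallelSet (U ∩ ball p n) (1 / (n + 1)) := by
  obtain ⟨m, hm⟩ := exists_nat_gt (dist x p)
  obtain ⟨n, hn, hmn⟩ := ((eventually_mem_innerParallelSet (hU.inter isOpen_ball)
    tendsto_one_div_add_atTop_nhds_zero_nat ⟨hx, hm⟩).and (eventually_ge_atTop m)).exists
  exact ⟨n, innerParallelSet_mono
    (inter_subset_inter_right U (ball_subset_ball (Nat.cast_le.2 hmn))) le_rfl hn⟩

lemma measurable_re_symm (f : ℂ ≃ₗᵢ[ℝ] R2) : Measurable fun y ↦ (f.symm y).re :=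
  Complex.measurable_re.comp f.symm.continuous.measurable

lemma relaxedArea_le_areaMeasure_add_sdiff (hC : ∀ z, ‖fderiv ℝ cutArg z‖ ≤ C) (hV : IsOpen V)
    (hVvol : volume V ≠ ∞) (hVU : V ⊆ U) (hu : MemW11 U u G) (hS : SphereValued U u) (hr : 0 < r)
    (hA : IsOpen A) (hAV : A ⊆ innerParallelSet V r) (f : ℂ ≃ₗᵢ[ℝ] R2) :
    relaxedArea u A ≤ areaMeasure U G A + ENNReal.ofReal (1 + 16 * C) *
      areaMeasure U G (A \ u ⁻¹' {y | 0 ≤ (f.symm y).re}) := by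
  have hAU : A ⊆ U := hAV.trans (innerParallelSet_subset.trans hVU)
  have huA : AEMeasurable u (areaMeasure A G) :=
    (memW11_mono hAU hu).1.aemeasurable.mono_ac areaMeasure_absolutelyContinuous
  have hP : MeasurableSet {y | (f.symm y).re < 0} :=
    measurableSet_lt (measurable_re_symm f) measurable_const
  have hκ : ∀ P, MeasurableSet P →
      (areaMeasure A G).map u P = areaMeasure U G (u ⁻¹' P ∩ A) := fun P hP ↦ by
    rw [Measure.map_apply_of_aemeasurable huA hP, ← Measure.restrict_apply' hA.measurableSet,
      restrict_areaMeasure hA.measurableSet, inter_eq_left.2 hAU]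
  refine (relaxedArea_le_areaMeasure_add hC hV hVvol (memW11_mono hVU hu)
    (ae_restrict_of_ae_restrict_of_subset hAU hS) hr hA.measurableSet hAV f).trans_eq ?_
  rw [hκ _ .univ, hκ _ hP, preimage_univ, univ_inter]
  congr 3
  ext x
  simp only [mem_inter_iff, Set.mem_sdiff, mem_preimage, mem_ofPred_eq, not_le, and_comm]

theorem envA_le_areaMeasure_univ (hU : IsOpen U) (hUΩ : U ⊆ Ω) (hu : MemW11 U u G)
    (hS : SphereValued U u) : envA u Ω U ≤ areaMeasure U G univ := by
  have := isLocallyFiniteMeasure_areaMeasure hu.2.1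
  obtain ⟨C, -, hC⟩ := exists_norm_fderiv_cutArg_le
  obtain ⟨f, hf⟩ := exists_linearIsometryEquiv_forall_exists_re_nonneg
  obtain ⟨g⟩ : Nonempty (ℕ ≃ ℕ × Bool) := nonempty_equiv_of_countable
  let V : ℕ → Set R2 := fun n ↦ U ∩ ball 0 n
  let N : ℕ → Set R2 := fun i ↦ innerParallelSet (V (g i).1) (1 / ((g i).1 + 1))
  let S : ℕ → Set R2 := fun i ↦ u ⁻¹' {y | 0 ≤ ((f (g i).2).symm y).re}
  have hS_meas : ∀ i, NullMeasurableSet (S i) (areaMeasure U G) := fun i ↦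
    (hu.1.aemeasurable.mono_ac areaMeasure_absolutelyContinuous).nullMeasurableSet_preimage
      (measurableSet_le measurable_const (measurable_re_symm _))
  have hcover : U ⊆ ⋃ i, N i ∩ S i := fun x hx ↦ by
    obtain ⟨n, hn⟩ := exists_mem_innerParallelSet_inter_ball hU hx 0
    obtain ⟨b, hb⟩ := hf (u x)
    refine mem_iUnion.2 ⟨g.symm (n, b), ?_⟩
    simp only [N, S, Equiv.apply_symm_apply]
    exact ⟨hn, hb⟩
  have hfin : ∀ i, areaMeasure U G (N i ∩ S i) ≠ ∞ := fun i ↦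
    measure_ne_top_of_subset
      (inter_subset_left.trans (innerParallelSet_subset.trans inter_subset_right))
      measure_ball_lt_top.ne
  have hlocal : ∀ i B, IsOpen B → B ⊆ N i → relaxedArea u B ≤ areaMeasure U G B +
      ENNReal.ofReal (1 + 16 * C) * areaMeasure U G (B \ (N i ∩ S i)) := fun i B hB hBN ↦ by
    rw [sdiff_inter, sdiff_eq_empty.2 hBN, empty_union]
    exact relaxedArea_le_areaMeasure_add_sdiff hC (hU.inter isOpen_ball)
      (measure_ne_top_of_subset inter_subset_right measure_ball_lt_top.ne) inter_subset_left
      hu hS Nat.one_div_pos_of_nat hB hBN (f (g i).2)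
  refine ENNReal.le_of_forall_pos_le_add fun ε hε _ ↦ ?_
  obtain ⟨A, hA, hEA, hsum⟩ := exists_isOpen_iUnion_subset_tsum_le
    (fun i ↦ isOpen_innerParallelSet) (fun i ↦ inter_subset_left)
    (fun i ↦ isOpen_innerParallelSet.measurableSet.nullMeasurableSet.inter (hS_meas i)) hfin
    ENNReal.ofReal_ne_top hlocal (ENNReal.coe_ne_zero.2 hε.ne')
  have hAU : ∀ i, A i ⊆ U := fun i ↦
    (hA i).2.trans (innerParallelSet_subset.trans inter_subset_left)
  calc envA u Ω U ≤ ∑' i, relaxedArea u (A i) :=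
        sInf_le ⟨A, fun i ↦ ⟨(hA i).1, (hAU i).trans hUΩ⟩, hcover.trans hEA, rfl⟩
    _ ≤ areaMeasure U G (⋃ i, N i ∩ S i) + ε := hsum
    _ ≤ areaMeasure U G univ + ε := by gcongr; exact subset_univ _

end UpperBound

theorem envA_eq_integral_on_open_general {Ω : Set R2} {u : R2 → R2}
    {G : R2 → Matrix (Fin 2) (Fin 2) ℝ} (hu : MemW11 Ω u G) (hS : SphereValued Ω u) {U : Set R2}
    (hU : IsOpen U) (hUΩ : U ⊆ Ω) :
    envA u Ω U = ∫⁻ x in U, ENNReal.ofReal √(1 + ∑ i, ∑ j, (G x i j) ^ 2) := by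
  simp only [← graphNorm_flatten]
  exact ((envA_le_areaMeasure_univ hU hUΩ (memW11_mono hUΩ hu)
    (ae_restrict_of_ae_restrict_of_subset hUΩ hS)).trans_eq areaMeasure_univ).antisymm
    (lintegral_graphNorm_le_envA hu)

/-- **Proposition (double relaxation).** For `u ∈ W^{1,1}(Ω;S¹)` and every open
`U ⊆ Ω`, `𝒜**(u,U) = ∫_U √(1+|∇u|²) dx`. -/
theorem envA_eq_integral_on_open (Ω : Set R2) (hΩo : IsOpen Ω)
    (hΩb : Bornology.IsBounded Ω) (hΩc : IsConnected Ω) (hΩl : HasLipschitzBoundary Ω)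
    (u : R2 → R2) (G : R2 → Matrix (Fin 2) (Fin 2) ℝ)
    (hu : MemW11 Ω u G) (hS : SphereValued Ω u) :
    ∀ U : Set R2, IsOpen U → U ⊆ Ω →
      envA u Ω U = ENNReal.ofReal (∫ x in U, Real.sqrt (1 + ∑ i, ∑ j, (G x i j) ^ 2)) := by
  intro U hU hUΩ
  have hUvol : volume U ≠ ∞ := measure_ne_top_of_subset hUΩ hΩb.measure_lt_top.ne
  have hG : IntegrableOn (fun x ↦ √(1 + ∑ i, ∑ j, (G x i j) ^ 2)) U := by
    simp only [← graphNorm_flatten]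
    exact integrableOn_graphNorm (integrableOn_flatten (memW11_mono hUΩ hu).2.1) hUvol
  rw [envA_eq_integral_on_open_general hu hS hU hUΩ,
    ofReal_integral_eq_lintegral_ofReal hG (.of_forall fun _ ↦ Real.sqrt_nonneg _)]
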